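/- arXiv:1802.08309 — 2 statements merged into one kernel-verified Lean document; each statement's English description precedes it below -/
import Mathlib

section
/- Assume the primitive set ℬ ⊆ ℕ is taut, let n > 0 and suppose ℬ^(n) ⊆ 𝒜 ⊆ ℬ, where ℬ^(n) := {b ∈ ℬ : every prime factor of b is ≤ n}. Suppose that {r+1, …, r+n} ∩ M_𝒜 = r + I for some r ∈ ℕ and some set I ⊆ {1,…,n}. Then the set of all k ∈ ℕ for which {k+1, …, k+n} ∩ M_ℬ = k + I has strictly positive lower logarithmic density. -/
open Filter Set Topology MeasureTheory

open scoped Classical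

noncomputable section

/-- The set of multiples `M_B ⊆ ℤ` of a set `B ⊆ ℕ`. -/
def multiplesZ (B : Set ℕ) : Set ℤ := {n : ℤ | ∃ b ∈ B, (b : ℤ) ∣ n}

/-- The `B`-free integers `F_B = ℤ ∖ M_B`. -/
def freeZ (B : Set ℕ) : Set ℤ := (multiplesZ B)ᶜ

/-- The logarithmically weighted averages `(1/log n) ∑_{k=1}^n 1_A(k)/k`. -/
def logWeight (A : Set ℤ) (n : ℕ) : ℝ :=
  (Real.log n)⁻¹ * ∑ k ∈ Finset.Icc 1 n, A.indicator (fun m : ℤ => ((m : ℝ))⁻¹) (k : ℤ)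

/-- The lower logarithmic density of a set `A ⊆ ℤ`. -/
def logDensLow (A : Set ℤ) : ℝ := liminf (logWeight A) atTop

/-- `A ⊆ ℤ` has logarithmic density `d`. -/
def HasLogDensity (A : Set ℤ) (d : ℝ) : Prop := Tendsto (logWeight A) atTop (𝓝 d)

/-- `B` is primitive: no element divides another one. -/
def Primitive (B : Set ℕ) : Prop := ∀ b ∈ B, ∀ b' ∈ B, b ∣ b' → b = b'

/-- `B` is Behrend: its set of multiples has logarithmic density one. -/
def IsBehrend (B : Set ℕ) : Prop := logDensLow (multiplesZ B) = 1

/-- `B` is taut: removing any element strictly decreases the logarithmic density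
of the set of multiples. -/
def IsTaut (B : Set ℕ) : Prop :=
  ∀ b ∈ B, logDensLow (multiplesZ (B \ {b})) < logDensLow (multiplesZ B)

/-- `B̃^(N)`: the elements of `B` having no prime factor `≤ N`. -/
def Btilde (B : Set ℕ) (N : ℕ) : Set ℕ := {b ∈ B | ∀ p : ℕ, p.Prime → p ∣ b → N < p}

/-- `B^(N)`: the elements of `B` all of whose prime factors are `≤ N`. -/
def Bsmooth (B : Set ℕ) (N : ℕ) : Set ℕ := {b ∈ B | ∀ p : ℕ, p.Prime → p ∣ b → p ≤ N}

/-- `m ↦ m ^ (-s)` as a monoid hom. -/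
def rpowHom (s : ℝ) : ℕ →* ℝ where
  toFun m := (m : ℝ) ^ (-s)
  map_one' := by simp
  map_mul' a b := by
    push_cast
    exact Real.mul_rpow (Nat.cast_nonneg a) (Nat.cast_nonneg b)

lemma rpowHom_apply (s : ℝ) (m : ℕ) : rpowHom s m = (m : ℝ) ^ (-s) := rfl

lemma prime_pow_dvd_factorial (p N : ℕ) (hp : p.Prime) : p ^ (N / p) ∣ N.factorial := by
  have h1 : (p * (N / p)).factorial ∣ N.factorial := Nat.factorial_dvd_factorial (Nat.mul_div_le N p)
  refine dvd_trans ?_ h1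
  rw [hp.pow_dvd_iff_le_factorization (Nat.factorial_ne_zero _),
    Nat.factorization_factorial_mul hp]
  omega

lemma sum_log_div_le (N : ℕ) (hN : 1 ≤ N) :
    ∑ p ∈ Nat.primesLE N, Real.log p / p ≤ Real.log N + Real.log 4 := by
  have hdvd : ∏ p ∈ Nat.primesLE N, p ^ (N / p) ∣ N.factorial := by
    apply Finset.prod_dvd_of_isRelPrime
    · intro a ha b hb hab
      simp only [Finset.mem_coe, Nat.mem_primesLE] at ha hb
      show IsRelPrime (a ^ (N / a)) (b ^ (N / b))
      rw [← Nat.coprime_iff_isRelPrime]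
      exact Nat.Coprime.pow _ _ ((Nat.coprime_primes ha.2 hb.2).2 hab)
    · intro p hp
      exact prime_pow_dvd_factorial p N (Nat.mem_primesLE.1 hp).2
  have hle : ∏ p ∈ Nat.primesLE N, p ^ (N / p) ≤ N ^ N :=
    (Nat.le_of_dvd (Nat.factorial_pos _) hdvd).trans (Nat.factorial_le_pow N)
  have hN0 : (0 : ℝ) < N := by exact_mod_cast hN
  have hlog : ∑ p ∈ Nat.primesLE N, ((N / p : ℕ) : ℝ) * Real.log p ≤ N * Real.log N := by
    have h2 : Real.log ((∏ p ∈ Nat.primesLE N, p ^ (N / p) : ℕ) : ℝ) ≤ Real.log ((N ^ N : ℕ) : ℝ) := by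
      apply Real.log_le_log
      · exact_mod_cast Finset.prod_pos fun p hp => pow_pos (Nat.mem_primesLE.1 hp).2.pos _
      · exact_mod_cast hle
    push_cast at h2
    rw [Real.log_prod, Real.log_pow] at h2
    · simpa [Real.log_pow] using h2
    · intro p hp
      have := (Nat.mem_primesLE.1 hp).2.pos
      positivity
  have hth := Chebyshev.theta_le_log4_mul_x hN0.le
  rw [Chebyshev.theta_eq_sum_primesLE_log] at hth
  have h3 : N * ∑ p ∈ Nat.primesLE N, Real.log p / p ≤
      ∑ p ∈ Nat.primesLE N, ((N / p : ℕ) : ℝ) * Real.log p + ∑ p ∈ Nat.primesLE N, Real.log p := by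
    rw [Finset.mul_sum, ← Finset.sum_add_distrib]
    apply Finset.sum_le_sum
    intro p hp
    have hp' := (Nat.mem_primesLE.1 hp).2
    have h4 : (N : ℝ) / p ≤ ((N / p : ℕ) : ℝ) + 1 := by
      have := Nat.lt_floor_add_one ((N : ℝ) / p)
      rw [Nat.floor_div_eq_div] at this
      exact this.le
    have h5 : 0 ≤ Real.log p := Real.log_natCast_nonneg p
    calc (N : ℝ) * (Real.log p / p) = N / p * Real.log p := by ring
      _ ≤ (((N / p : ℕ) : ℝ) + 1) * Real.log p := by gcongr
      _ = _ := by ring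
  have h6 : N * ∑ p ∈ Nat.primesLE N, Real.log p / p ≤ N * (Real.log N + Real.log 4) := by
    linarith
  exact le_of_mul_le_mul_left h6 hN0

/-- The Euler product over primes `≤ N`. -/
def Zp (N : ℕ) : ℝ := ∏ p ∈ Nat.primesLE N, (1 - (p : ℝ)⁻¹)⁻¹

lemma euler_factor_le (p : ℕ) (hp : p.Prime) (u : ℝ) (hu : 0 < u) :
    (1 - (p : ℝ)⁻¹)⁻¹ ≤ (1 - (p : ℝ) ^ (-(1 + u)))⁻¹ * Real.exp (2 * u * (Real.log p / p)) := by
  have hp2 : (2 : ℝ) ≤ p := by exact_mod_cast hp.two_le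
  have hp0 : (0 : ℝ) < p := by linarith
  have hinv : (p : ℝ)⁻¹ ≤ 1 / 2 := by
    rw [inv_eq_one_div]; exact one_div_le_one_div_of_le (by norm_num) hp2
  have hs : (p : ℝ) ^ (-(1 + u)) = (p : ℝ)⁻¹ * Real.exp (-(u * Real.log p)) := by
    rw [neg_add, Real.rpow_add hp0, Real.rpow_neg_one, Real.rpow_def_of_pos hp0]
    congr 2; ring
  have hlog : 0 ≤ Real.log p := Real.log_natCast_nonneg p
  have hexp : 1 - u * Real.log p ≤ Real.exp (-(u * Real.log p)) := by
    have := Real.add_one_le_exp (-(u * Real.log p)); linarith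
  have hexp1 : Real.exp (-(u * Real.log p)) ≤ 1 := by
    rw [Real.exp_le_one_iff]; have := mul_nonneg hu.le hlog; linarith
  have hpi : (0 : ℝ) < (p : ℝ)⁻¹ := by positivity
  set E := Real.exp (-(u * Real.log p))
  have hd1 : 0 < 1 - (p : ℝ)⁻¹ := by linarith
  have hd2 : 0 < 1 - (p : ℝ) ^ (-(1 + u)) := by rw [hs]; nlinarith
  have hE2 : 1 + 2 * u * (Real.log p / p) ≤ Real.exp (2 * u * (Real.log p / p)) := by
    have := Real.add_one_le_exp (2 * u * (Real.log p / p)); linarith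
  have key : (1 - (p : ℝ) ^ (-(1 + u))) ≤ (1 - (p : ℝ)⁻¹) * (1 + 2 * u * (Real.log p / p)) := by
    rw [hs, div_eq_mul_inv]
    have h1 : (p : ℝ)⁻¹ * (1 - E) ≤ (p : ℝ)⁻¹ * (u * Real.log p) := by
      apply mul_le_mul_of_nonneg_left _ hpi.le; linarith
    have h2 : 0 ≤ (1 - 2 * (p : ℝ)⁻¹) * (u * Real.log p * (p : ℝ)⁻¹) := by
      apply mul_nonneg (by linarith); positivity
    nlinarith
  have key2 := key.trans (mul_le_mul_of_nonneg_left hE2 hd1.le)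
  rw [inv_mul_eq_div, le_div_iff₀ hd2, inv_mul_le_iff₀ hd1]
  exact key2

lemma Zp_le : ∃ C : ℝ, 0 < C ∧ ∀ᶠ x : ℕ in atTop, Zp x ≤ C * Real.log x := by
  refine ⟨2 * Real.exp (2 + 2 * Real.log 4), by positivity, ?_⟩
  have hlogt : Tendsto (fun x : ℕ => Real.log (x : ℝ)) atTop atTop :=
    Real.tendsto_log_atTop.comp tendsto_natCast_atTop_atTop
  have hz : ∀ᶠ s : ℝ in 𝓝[>] 1, (s - 1) * ∑' (n : ℕ), 1 / (n : ℝ) ^ s < 2 :=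
    tendsto_sub_mul_tsum_nat_rpow.eventually_lt_const (by norm_num)
  have ht : Tendsto (fun x : ℕ => 1 + (Real.log (x : ℝ))⁻¹) atTop (𝓝[>] 1) := by
    rw [tendsto_nhdsWithin_iff]
    constructor
    · simpa using (tendsto_inv_atTop_zero.comp hlogt).const_add 1
    · filter_upwards [hlogt.eventually_gt_atTop 0] with x hx
      simp only [mem_Ioi]
      have := inv_pos.2 hx
      linarith
  filter_upwards [ht.eventually hz, hlogt.eventually_ge_atTop 1, eventually_ge_atTop 1]
    with x h1 h2 h3
  set u : ℝ := (Real.log (x : ℝ))⁻¹ with hu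
  have hu0 : 0 < u := inv_pos.2 (by linarith)
  have hu1 : u * Real.log x = 1 := inv_mul_cancel₀ (by linarith)
  have hule : u ≤ 1 := inv_le_one_of_one_le₀ h2
  have hnorm : ∀ {p : ℕ}, p.Prime → ‖rpowHom (1 + u) p‖ < 1 := by
    intro p hp
    rw [rpowHom_apply, Real.norm_of_nonneg (by positivity)]
    exact Real.rpow_lt_one_of_one_lt_of_neg (by exact_mod_cast hp.one_lt) (by linarith)
  have hE := (EulerProduct.summable_and_hasSum_smoothNumbers_prod_primesBelow_geometric
    (f := rpowHom (1 + u)) hnorm (x + 1)).2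
  have hsumm : Summable (fun n : ℕ => 1 / (n : ℝ) ^ (1 + u)) :=
    Real.summable_one_div_nat_rpow.2 (by linarith)
  have hfun : (fun n : ℕ => 1 / (n : ℝ) ^ (1 + u)) = fun n : ℕ => rpowHom (1 + u) n := by
    funext n
    rw [rpowHom_apply, Real.rpow_neg (by positivity), one_div]
  have hprod : ∏ p ∈ Nat.primesLE x, (1 - (p : ℝ) ^ (-(1 + u)))⁻¹ ≤ ∑' n : ℕ, 1 / (n : ℝ) ^ (1 + u) := by
    have : ∏ p ∈ Nat.primesLE x, (1 - (p : ℝ) ^ (-(1 + u)))⁻¹ =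
      ∑' m : (x + 1).smoothNumbers, rpowHom (1 + u) m := hE.tsum_eq.symm
    rw [this, hfun]
    rw [hfun] at hsumm
    exact hsumm.tsum_subtype_le _ _ (fun n => by rw [rpowHom_apply]; positivity)
  have hz2 : ∑' n : ℕ, 1 / (n : ℝ) ^ (1 + u) ≤ 2 * Real.log x := by
    have : u * ∑' n : ℕ, 1 / (n : ℝ) ^ (1 + u) < 2 := by simpa using h1
    have h4 : Real.log x * (u * ∑' n : ℕ, 1 / (n : ℝ) ^ (1 + u)) ≤ Real.log x * 2 := by
      apply mul_le_mul_of_nonneg_left this.le; linarith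
    rw [← mul_assoc, mul_comm (Real.log x) u, hu1] at h4
    linarith
  have hnn : ∀ p ∈ Nat.primesLE x, 0 ≤ (1 - (p : ℝ) ^ (-(1 + u)))⁻¹ := by
    intro p hp
    have := hnorm (Nat.mem_primesLE.1 hp).2
    rw [rpowHom_apply, Real.norm_of_nonneg (by positivity)] at this
    exact inv_nonneg.2 (by linarith)
  calc Zp x ≤ ∏ p ∈ Nat.primesLE x, ((1 - (p : ℝ) ^ (-(1 + u)))⁻¹ *
        Real.exp (2 * u * (Real.log p / p))) := by
        apply Finset.prod_le_prod
        · intro p hp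
          have : (1 : ℝ) < p := by exact_mod_cast (Nat.mem_primesLE.1 hp).2.one_lt
          have := inv_lt_one_of_one_lt₀ this
          exact inv_nonneg.2 (by linarith)
        · intro p hp
          exact euler_factor_le p (Nat.mem_primesLE.1 hp).2 u hu0
    _ = (∏ p ∈ Nat.primesLE x, (1 - (p : ℝ) ^ (-(1 + u)))⁻¹) *
        Real.exp (2 * u * ∑ p ∈ Nat.primesLE x, Real.log p / p) := by
        rw [Finset.prod_mul_distrib, ← Real.exp_sum, Finset.mul_sum]
    _ ≤ (2 * Real.log x) * Real.exp (2 + 2 * Real.log 4) := by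
        have hl4 : 0 ≤ Real.log 4 := Real.log_nonneg (by norm_num)
        apply mul_le_mul (hprod.trans hz2) _ (by positivity) (by linarith)
        apply Real.exp_le_exp.2
        have h5 := mul_le_mul_of_nonneg_left (sum_log_div_le x h3) (by positivity : 0 ≤ 2 * u)
        nlinarith
    _ = _ := by ring

/-- Density of the multiples of `q` that are free of the elements of the list. -/
def Vd : List ℕ → ℕ → ℝ
  | [], q => (q : ℝ)⁻¹
  | b :: l, q => Vd l q - Vd l (Nat.lcm q b)

/-- Integers `m ∈ ℕ` divisible by no element of `l`. -/
def Fr (l : List ℕ) : Set ℕ := {m | ∀ b ∈ l, ¬ b ∣ m}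

/-- weight `1/m` on `(N+1)`-smooth numbers. -/
def wt (N : ℕ) (m : ℕ) : ℝ := ((N + 1).smoothNumbers).indicator (fun m : ℕ => (m : ℝ)⁻¹) m

lemma wt_nonneg (N m : ℕ) : 0 ≤ wt N m := by
  unfold wt
  apply Set.indicator_nonneg
  intro m _
  positivity

lemma hasSum_wt (N : ℕ) : HasSum (wt N) (Zp N) := by
  have hnorm : ∀ {p : ℕ}, p.Prime → ‖rpowHom 1 p‖ < 1 := by
    intro p hp
    rw [rpowHom_apply, Real.norm_of_nonneg (by positivity)]
    exact Real.rpow_lt_one_of_one_lt_of_neg (by exact_mod_cast hp.one_lt) (by linarith)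
  have hE := (EulerProduct.summable_and_hasSum_smoothNumbers_prod_primesBelow_geometric
    (f := rpowHom 1) hnorm (N + 1)).2
  have h1 : ∀ m : ℕ, rpowHom 1 m = (m : ℝ)⁻¹ := fun m => by
    rw [rpowHom_apply, Real.rpow_neg_one]
  simp only [h1] at hE
  exact hasSum_subtype_iff_indicator.1 hE

lemma Zp_pos (N : ℕ) : 0 < Zp N := by
  apply Finset.prod_pos
  intro p hp
  have : (1 : ℝ) < p := by exact_mod_cast (Nat.mem_primesLE.1 hp).2.one_lt
  have := inv_lt_one_of_one_lt₀ this
  exact inv_pos.2 (by linarith)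

lemma hasSum_wt_dvd (N q : ℕ) (hq : q ∈ (N + 1).smoothNumbers) :
    HasSum ({m | q ∣ m}.indicator (wt N)) (Zp N * (q : ℝ)⁻¹) := by
  have hq0 : q ≠ 0 := hq.1
  have hinj : Function.Injective (fun m : ℕ => q * m) := fun a b h =>
    Nat.eq_of_mul_eq_mul_left (Nat.pos_of_ne_zero hq0) h
  rw [← hinj.hasSum_iff]
  · have : ({m | q ∣ m}.indicator (wt N)) ∘ (fun m : ℕ => q * m) = fun m => wt N m * (q : ℝ)⁻¹ := by
      funext m
      simp only [Function.comp, wt, Set.indicator, mem_ofPred_eq, dvd_mul_right, if_true]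
      by_cases hm : m ∈ (N + 1).smoothNumbers
      · rw [if_pos hm, if_pos (Nat.mul_mem_smoothNumbers hq hm)]
        push_cast
        rw [mul_inv, mul_comm]
      · rw [if_neg hm, if_neg, zero_mul]
        intro h
        exact hm (Nat.mem_smoothNumbers_of_dvd h (dvd_mul_left m q))
    rw [this]
    exact (hasSum_wt N).mul_right _
  · intro x hx
    apply Set.indicator_of_notMem
    rintro ⟨c, rfl⟩
    exact hx ⟨c, rfl⟩

lemma hasSum_V (N : ℕ) (l : List ℕ) : (∀ b ∈ l, b ∈ (N + 1).smoothNumbers) →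
    ∀ q ∈ (N + 1).smoothNumbers,
    HasSum ({m | q ∣ m ∧ m ∈ Fr l}.indicator (wt N)) (Zp N * Vd l q) := by
  induction l with
  | nil =>
    intro _ q hq
    simpa [Fr, Vd] using hasSum_wt_dvd N q hq
  | cons b l ih =>
    intro hl q hq
    have hb : b ∈ (N + 1).smoothNumbers := hl b (by simp)
    have hl' : ∀ b ∈ l, b ∈ (N + 1).smoothNumbers := fun c hc => hl c (by simp [hc])
    have hlcm : Nat.lcm q b ∈ (N + 1).smoothNumbers :=
      Nat.mem_smoothNumbers_of_dvd (Nat.mul_mem_smoothNumbers hq hb) (Nat.lcm_dvd_mul q b)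
    have h := (ih hl' q hq).sub (ih hl' _ hlcm)
    rw [← mul_sub] at h
    have hfun : {m | q ∣ m ∧ m ∈ Fr (b :: l)}.indicator (wt N) = fun m =>
        {m | q ∣ m ∧ m ∈ Fr l}.indicator (wt N) m -
        {m | Nat.lcm q b ∣ m ∧ m ∈ Fr l}.indicator (wt N) m := by
      funext m
      simp only [Set.indicator, mem_ofPred_eq, Fr, List.forall_mem_cons, Nat.lcm_dvd_iff]
      by_cases h1 : q ∣ m <;> by_cases h2 : b ∣ m <;> by_cases h3 : ∀ b ∈ l, ¬ b ∣ m <;>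
        simp [h1, h2, h3]
    rw [hfun]
    exact h

lemma one_smooth (N : ℕ) : 1 ∈ (N + 1).smoothNumbers := Nat.mem_smoothNumbers_of_dvd
    (Nat.mem_smoothNumbers.2 ⟨one_ne_zero, by simp⟩) (dvd_refl 1)

lemma hasSum_V1 (N : ℕ) (l : List ℕ) (hl : ∀ b ∈ l, b ∈ (N + 1).smoothNumbers) :
    HasSum ((Fr l).indicator (wt N)) (Zp N * Vd l 1) := by
  have := hasSum_V N l hl 1 (one_smooth N)
  simpa using this

lemma exists_smooth (l : List ℕ) (hl : ∀ b ∈ l, b ≠ 0) :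
    ∃ N0 : ℕ, ∀ N ≥ N0, ∀ b ∈ l, b ∈ (N + 1).smoothNumbers := by
  refine ⟨l.sum, fun N hN b hb => ?_⟩
  apply Nat.mem_smoothNumbers_of_lt (Nat.pos_of_ne_zero (hl b hb))
  have := List.le_sum_of_mem hb
  omega

lemma Vd_anti (l l' : List ℕ) (hl : ∀ b ∈ l', b ≠ 0) (hsub : ∀ b ∈ l, b ∈ l') :
    Vd l' 1 ≤ Vd l 1 := by
  obtain ⟨N, hN⟩ := exists_smooth l' hl
  have h1 := hasSum_V1 N l' (hN N le_rfl)
  have h2 := hasSum_V1 N l (fun b hb => hN N le_rfl b (hsub b hb))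
  have h3 := hasSum_le (fun m => Set.indicator_le_indicator_of_subset
    (fun m (hm : m ∈ Fr l') b hb => hm b (hsub b hb)) (fun m => wt_nonneg N m) m) h1 h2
  exact le_of_mul_le_mul_left h3 (Zp_pos N)

lemma Vd_nonneg (l : List ℕ) (hl : ∀ b ∈ l, b ≠ 0) : 0 ≤ Vd l 1 := by
  obtain ⟨N, hN⟩ := exists_smooth l hl
  have h1 := hasSum_V1 N l (hN N le_rfl)
  have := h1.nonneg (fun m => Set.indicator_nonneg (fun m _ => wt_nonneg N m) m)
  exact nonneg_of_mul_nonneg_right this (Zp_pos N)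

lemma Vd_le_one (l : List ℕ) (hl : ∀ b ∈ l, b ≠ 0) : Vd l 1 ≤ 1 := by
  simpa [Vd] using Vd_anti [] l hl (by simp)

/-- log-weighted counting function -/
def Hs (S : Set ℤ) (x : ℕ) : ℝ :=
  ∑ k ∈ Finset.Icc 1 x, if (k : ℤ) ∈ S then (k : ℝ)⁻¹ else 0

lemma logWeight_eq (S : Set ℤ) (x : ℕ) : logWeight S x = (Real.log x)⁻¹ * Hs S x := by
  unfold logWeight Hs
  congr 1

lemma Hs_mono {S S' : Set ℤ} (x : ℕ) (h : ∀ k : ℕ, 1 ≤ k → k ≤ x → (k : ℤ) ∈ S → (k : ℤ) ∈ S') :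
    Hs S x ≤ Hs S' x := by
  apply Finset.sum_le_sum
  intro k hk
  rw [Finset.mem_Icc] at hk
  have hk0 : (0 : ℝ) ≤ (k : ℝ)⁻¹ := by positivity
  by_cases h1 : (k : ℤ) ∈ S
  · simp [h1, h k hk.1 hk.2 h1]
  · rw [if_neg h1]; split_ifs <;> simp

lemma Hs_nonneg (S : Set ℤ) (x : ℕ) : 0 ≤ Hs S x := by
  apply Finset.sum_nonneg
  intro k _
  split_ifs <;> positivity

/-- multiples of a list -/
def Ml (l : List ℕ) : Set ℤ := multiplesZ {b | b ∈ l}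

lemma mem_Ml_nat (l : List ℕ) (m : ℕ) : (m : ℤ) ∈ Ml l ↔ m ∉ Fr l := by
  simp [Ml, multiplesZ, Fr, Int.natCast_dvd_natCast]

lemma Hs_le_hasSum (T : Set ℕ) (S : Set ℤ) (x : ℕ) (c : ℝ)
    (hS : ∀ k : ℕ, 1 ≤ k → k ≤ x → (k : ℤ) ∈ S → k ∈ T)
    (h : HasSum (T.indicator (wt x)) c) : Hs S x ≤ c := by
  refine le_trans ?_ (sum_le_hasSum (Finset.Icc 1 x) (fun m _ =>
    Set.indicator_nonneg (fun m _ => wt_nonneg x m) m) h)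
  apply Finset.sum_le_sum
  intro k hk
  rw [Finset.mem_Icc] at hk
  split_ifs with h1
  · rw [Set.indicator_of_mem (hS k hk.1 hk.2 h1), wt,
      Set.indicator_of_mem (Nat.mem_smoothNumbers_of_lt (by omega) (by omega))]
  · exact Set.indicator_nonneg (fun m _ => wt_nonneg x m) k

lemma Hs_compl_le (l : List ℕ) (hl : ∀ b ∈ l, b ≠ 0) :
    ∀ᶠ x : ℕ in atTop, Hs (Ml l)ᶜ x ≤ Zp x * Vd l 1 := by
  obtain ⟨N, hN⟩ := exists_smooth l hl
  filter_upwards [eventually_ge_atTop N] with x hx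
  refine Hs_le_hasSum (Fr l) _ x _ ?_ (hasSum_V1 x l (hN x hx))
  intro k _ _ hk
  by_contra h
  exact hk ((mem_Ml_nat l k).2 h)

/-- The density `sup_F d(M_F)`. -/
def Dn (B : Set ℕ) : ℝ := sSup {d | ∃ l : List ℕ, (∀ b ∈ l, b ∈ B) ∧ d = 1 - Vd l 1}

lemma ne_zero_of {B : Set ℕ} (hB : 0 ∉ B) {l : List ℕ} (hl : ∀ b ∈ l, b ∈ B) : ∀ b ∈ l, b ≠ 0 := by
  rintro b hb rfl
  exact hB (hl 0 hb)

lemma Dn_bdd (B : Set ℕ) (hB : 0 ∉ B) :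
    BddAbove {d | ∃ l : List ℕ, (∀ b ∈ l, b ∈ B) ∧ d = 1 - Vd l 1} := by
  refine ⟨1, ?_⟩
  rintro d ⟨l, hl, rfl⟩
  linarith [Vd_nonneg l (ne_zero_of hB hl)]

lemma le_Dn (B : Set ℕ) (hB : 0 ∉ B) (l : List ℕ) (hl : ∀ b ∈ l, b ∈ B) : 1 - Vd l 1 ≤ Dn B :=
  le_csSup (Dn_bdd B hB) ⟨l, hl, rfl⟩

lemma Dn_nonempty (B : Set ℕ) :
    {d | ∃ l : List ℕ, (∀ b ∈ l, b ∈ B) ∧ d = 1 - Vd l 1}.Nonempty :=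
  ⟨_, [], by simp, rfl⟩

lemma exists_lt_Dn (B : Set ℕ) (d : ℝ) (hd : d < Dn B) :
    ∃ l : List ℕ, (∀ b ∈ l, b ∈ B) ∧ d < 1 - Vd l 1 := by
  obtain ⟨_, ⟨l, hl, rfl⟩, h⟩ := exists_lt_of_lt_csSup (Dn_nonempty B) hd
  exact ⟨l, hl, h⟩

lemma Dn_le (B : Set ℕ) (c : ℝ) (h : ∀ l : List ℕ, (∀ b ∈ l, b ∈ B) → 1 - Vd l 1 ≤ c) :
    Dn B ≤ c := by
  apply csSup_le (Dn_nonempty B)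
  rintro _ ⟨l, hl, rfl⟩
  exact h l hl

lemma Dn_nonneg (B : Set ℕ) (hB : 0 ∉ B) : 0 ≤ Dn B := by
  have := le_Dn B hB [] (by simp)
  simpa [Vd] using this

lemma Dn_le_one (B : Set ℕ) (hB : 0 ∉ B) : Dn B ≤ 1 := by
  apply Dn_le
  intro l hl
  linarith [Vd_nonneg l (ne_zero_of hB hl)]

lemma Dn_mono {B B' : Set ℕ} (hB : 0 ∉ B') (h : B ⊆ B') : Dn B ≤ Dn B' := by
  apply Dn_le
  intro l hl
  exact le_Dn B' hB l (fun b hb => h (hl b hb))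

lemma Hs_diff_le (B : Set ℕ) (hB : 0 ∉ B) (l : List ℕ) (hl : ∀ b ∈ l, b ∈ B) :
    ∀ᶠ x : ℕ in atTop, Hs (multiplesZ B \ Ml l) x ≤ Zp x * (Dn B - (1 - Vd l 1)) := by
  obtain ⟨N, hN⟩ := exists_smooth l (ne_zero_of hB hl)
  filter_upwards [eventually_ge_atTop N] with x hx
  set l2 : List ℕ := ((Finset.Icc 1 x).filter (· ∈ B)).toList with hl2
  have hm2 : ∀ b, b ∈ l2 ↔ (1 ≤ b ∧ b ≤ x) ∧ b ∈ B := by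
    intro b; simp [hl2]
  have hB2 : ∀ b ∈ l ++ l2, b ∈ B := by
    intro b hb
    rcases List.mem_append.1 hb with h | h
    · exact hl b h
    · exact ((hm2 b).1 h).2
  have hs2 : ∀ b ∈ l ++ l2, b ∈ (x + 1).smoothNumbers := by
    intro b hb
    rcases List.mem_append.1 hb with h | h
    · exact hN x hx b h
    · have := ((hm2 b).1 h).1
      exact Nat.mem_smoothNumbers_of_lt (by omega) (by omega)
  have h1 := (hasSum_V1 x l (hN x hx)).sub (hasSum_V1 x _ hs2)
  have hfun : (fun m => (Fr l).indicator (wt x) m - (Fr (l ++ l2)).indicator (wt x) m) =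
      (Fr l \ Fr (l ++ l2)).indicator (wt x) := by
    funext m
    have : m ∈ Fr (l ++ l2) → m ∈ Fr l := fun h b hb => h b (by simp [hb])
    by_cases h2 : m ∈ Fr (l ++ l2)
    · simp [h2, this h2]
    · by_cases h3 : m ∈ Fr l <;> simp [h2, h3]
  rw [hfun] at h1
  have h4 := Hs_le_hasSum _ (multiplesZ B \ Ml l) x _ (by
    rintro k hk1 hk2 ⟨⟨b, hb, hbk⟩, hk4⟩
    rw [mem_Ml_nat, not_not] at hk4
    refine ⟨hk4, fun hk5 => ?_⟩
    have hbk' : b ∣ k := Int.natCast_dvd_natCast.1 hbk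
    refine hk5 b (List.mem_append_right _ ((hm2 b).2 ⟨⟨?_, ?_⟩, hb⟩)) hbk'
    · exact Nat.pos_of_dvd_of_pos hbk' hk1
    · exact (Nat.le_of_dvd hk1 hbk').trans hk2) h1
  refine h4.trans ?_
  rw [← mul_sub]
  apply mul_le_mul_of_nonneg_left _ (Zp_pos x).le
  linarith [le_Dn B hB _ hB2]

lemma lcm_mul_coprime (q1 q2 b : ℕ) (h2 : b.Coprime q2) :
    Nat.lcm (q1 * q2) b = Nat.lcm q1 b * q2 := by
  unfold Nat.lcm
  rw [Nat.Coprime.gcd_mul_right_cancel q1 h2.symm, Nat.div_mul_right_comm]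
  · congr 1; ring
  · exact (Nat.gcd_dvd_left _ _).mul_right _

lemma Vd_mul_left (l2 : List ℕ) : ∀ q1 q2 : ℕ, (∀ b ∈ l2, b.Coprime q1) →
    Vd l2 (q1 * q2) = (q1 : ℝ)⁻¹ * Vd l2 q2 := by
  induction l2 with
  | nil =>
    intro q1 q2 _
    simp [Vd, mul_inv, mul_comm]
  | cons b l ih =>
    intro q1 q2 h
    have hb : b.Coprime q1 := h b (by simp)
    have h' : ∀ b ∈ l, b.Coprime q1 := fun c hc => h c (by simp [hc])
    have hl : Nat.lcm (q1 * q2) b = q1 * Nat.lcm q2 b := by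
      rw [mul_comm q1 q2, lcm_mul_coprime _ _ _ hb, mul_comm]
    rw [Vd, Vd, hl, ih _ _ h', ih _ _ h', mul_sub]

lemma Vd_append (l1 l2 : List ℕ) (h12 : ∀ a ∈ l1, ∀ b ∈ l2, b.Coprime a) :
    ∀ q1, (∀ b ∈ l2, b.Coprime q1) → Vd (l1 ++ l2) q1 = Vd l1 q1 * Vd l2 1 := by
  induction l1 with
  | nil =>
    intro q1 h
    have := Vd_mul_left l2 q1 1 h
    simpa [Vd] using this
  | cons a l ih =>
    intro q1 h
    have h' : ∀ a ∈ l, ∀ b ∈ l2, b.Coprime a := fun c hc => h12 c (by simp [hc])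
    have hl : ∀ b ∈ l2, b.Coprime (Nat.lcm q1 a) := fun b hb =>
      Nat.Coprime.coprime_dvd_right (Nat.lcm_dvd_mul q1 a)
        (Nat.Coprime.mul_right (h b hb) (h12 a (by simp) b hb))
    rw [List.cons_append, Vd, Vd, ih h' _ h, ih h' _ hl, sub_mul]

/-- zero-one law -/
lemma zero_one (A : Set ℕ) (hA : 0 ∉ A) (η : ℝ) (hη : 0 < η) (h : ∀ T, η ≤ Dn (Btilde A T)) (T : ℕ) :
    Dn (Btilde A T) = 1 := by
  have h0 : ∀ T, 0 ∉ Btilde A T := fun T h => hA h.1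
  apply le_antisymm (Dn_le_one _ (h0 T))
  by_contra hlt
  push Not at hlt
  set d := Dn (Btilde A T) with hd
  have hη1 : η ≤ 1 := (h T).trans hlt.le
  -- 1 - d ≤ (1 - d + ε)(1 - η/2)
  have key : ∀ ε > 0, 1 - d ≤ (1 - d + ε) * (1 - η / 2) := by
    intro ε hε
    obtain ⟨l, hl, hl1⟩ := exists_lt_Dn (Btilde A T) (d - ε) (by linarith)
    have hl0 := ne_zero_of (h0 T) hl
    obtain ⟨l', hl', hl1'⟩ := exists_lt_Dn (Btilde A (T + l.sum)) (η / 2)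
      (by linarith [h (T + l.sum)])
    have hl0' := ne_zero_of (h0 _) hl'
    have hcop : ∀ a ∈ l, ∀ b ∈ l', b.Coprime a := by
      intro a ha b hb
      apply Nat.coprime_of_dvd
      intro p hp hpb hpa
      have h1 := (hl' b hb).2 p hp hpb
      have h2 := Nat.le_of_dvd (Nat.pos_of_ne_zero (hl0 a ha)) hpa
      have h3 := List.le_sum_of_mem ha
      omega
    have h4 := Vd_append l l' hcop 1 (by simp)
    have h5 := le_Dn (Btilde A T) (h0 T) (l ++ l') (by
      intro b hb
      rcases List.mem_append.1 hb with h | h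
      · exact hl b h
      · exact ⟨(hl' b h).1, fun p hp hpb => by have := (hl' b h).2 p hp hpb; omega⟩)
    rw [h4] at h5
    have h6 := Vd_nonneg l hl0
    have h7 := Vd_nonneg l' hl0'
    have h8 : Vd l 1 * Vd l' 1 ≤ (1 - d + ε) * (1 - η / 2) := by
      apply mul_le_mul <;> linarith
    linarith
  have := key ((1 - d) * η / 4) (by nlinarith [mul_pos (sub_pos.2 hlt) hη])
  nlinarith [mul_pos (sub_pos.2 hlt) hη, mul_pos (mul_pos (sub_pos.2 hlt) hη) hη]

lemma Hs_univ_le (x : ℕ) : Hs univ x ≤ 1 + Real.log x := by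
  have := harmonic_le_one_add_log x
  rw [harmonic_eq_sum_Icc] at this
  push_cast at this
  simpa [Hs] using this

lemma le_Hs_univ (x : ℕ) (hx : 1 ≤ x) : Real.log x ≤ Hs univ x := by
  have := log_add_one_le_harmonic x
  rw [harmonic_eq_sum_Icc] at this
  push_cast at this
  have h2 : Real.log x ≤ Real.log (x + 1) := by
    apply Real.log_le_log
    · exact_mod_cast hx
    · linarith
  refine h2.trans ?_
  simpa [Hs] using this

lemma Hs_le (S : Set ℤ) (x : ℕ) : Hs S x ≤ 1 + Real.log x :=
  (Hs_mono x (fun _ _ _ _ => mem_univ _)).trans (Hs_univ_le x)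

lemma tendsto_log_nat : Tendsto (fun x : ℕ => Real.log (x : ℝ)) atTop atTop :=
  Real.tendsto_log_atTop.comp tendsto_natCast_atTop_atTop

lemma logWeight_le (S : Set ℤ) : ∀ᶠ x : ℕ in atTop, logWeight S x ≤ 2 := by
  filter_upwards [tendsto_log_nat.eventually_ge_atTop 1] with x hx
  rw [logWeight_eq, inv_mul_le_iff₀ (by linarith)]
  linarith [Hs_le S x]

lemma logWeight_nonneg (S : Set ℤ) (x : ℕ) : 0 ≤ logWeight S x := by
  rw [logWeight_eq]
  exact mul_nonneg (inv_nonneg.2 (Real.log_natCast_nonneg x)) (Hs_nonneg S x)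

lemma le_logDensLow (S : Set ℤ) (d : ℝ) (h : ∀ᶠ x : ℕ in atTop, d ≤ logWeight S x) :
    d ≤ logDensLow S := by
  apply le_liminf_of_le
  · exact IsBoundedUnder.isCoboundedUnder_ge ⟨2, by simpa using logWeight_le S⟩
  · exact h

lemma logDensLow_le_of (S S' : Set ℤ)
    (h : ∀ ε > 0, ∀ᶠ x : ℕ in atTop, logWeight S x ≤ logWeight S' x + ε) :
    logDensLow S ≤ logDensLow S' := by
  apply le_of_forall_pos_le_add
  intro ε hε
  have h1 : logDensLow S - ε / 2 < logDensLow S := by linarith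
  have h2 : ∀ᶠ x : ℕ in atTop, logDensLow S - ε / 2 < logWeight S x := by
    refine eventually_lt_of_lt_liminf h1 ?_
    exact isBoundedUnder_of ⟨0, fun x => logWeight_nonneg S x⟩
  have h3 : logDensLow S - ε ≤ logDensLow S' := by
    apply le_logDensLow
    filter_upwards [h2, h (ε / 2) (by linarith)] with x hx1 hx2
    linarith
  linarith

lemma Hs_scale (c : ℕ) (hc : 1 ≤ c) (S : Set ℤ) (x : ℕ) :
    Hs {m | ∃ k ∈ S, m = c * k} x ≤ Hs S x := by
  unfold Hs
  rw [← Finset.sum_filter, ← Finset.sum_filter]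
  have h1 : (Finset.Icc 1 x).filter (fun k : ℕ => (k : ℤ) ∈ {m : ℤ | ∃ k ∈ S, m = c * k}) ⊆
      ((Finset.Icc 1 x).filter (fun k : ℕ => (k : ℤ) ∈ S)).image (fun k => c * k) := by
    intro m hm
    simp only [Finset.mem_filter, Finset.mem_Icc, mem_ofPred_eq] at hm
    obtain ⟨⟨hm1, hm2⟩, k, hk, hmk⟩ := hm
    have hk0 : 0 < k := by
      by_contra hneg
      have : (c : ℤ) * k ≤ 0 := mul_nonpos_of_nonneg_of_nonpos (by positivity) (by omega)
      omega
    lift k to ℕ using hk0.le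
    have hmk' : m = c * k := by exact_mod_cast hmk
    simp only [Finset.mem_image, Finset.mem_filter, Finset.mem_Icc]
    refine ⟨k, ⟨⟨by omega, ?_⟩, hk⟩, hmk'.symm⟩
    nlinarith
  refine (Finset.sum_le_sum_of_subset_of_nonneg h1 (fun k _ _ => by positivity)).trans ?_
  rw [Finset.sum_image]
  · apply Finset.sum_le_sum
    intro k hk
    simp only [Finset.mem_filter, Finset.mem_Icc] at hk
    have h2 : (1 : ℝ) ≤ k := by exact_mod_cast hk.1.1
    have h3 : (1 : ℝ) ≤ c := by exact_mod_cast hc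
    push_cast
    apply inv_anti₀ (by linarith)
    nlinarith
  · intro a _ b _ h
    exact Nat.eq_of_mul_eq_mul_left hc h

lemma Hs_union_le (S S' : Set ℤ) (x : ℕ) : Hs (S ∪ S') x ≤ Hs S x + Hs S' x := by
  unfold Hs
  rw [← Finset.sum_add_distrib]
  apply Finset.sum_le_sum
  intro k _
  have : (0 : ℝ) ≤ (k : ℝ)⁻¹ := by positivity
  by_cases h1 : (k : ℤ) ∈ S <;> by_cases h2 : (k : ℤ) ∈ S' <;> simp [h1, h2]

lemma taut_tail (B : Set ℕ) (hB0 : 0 ∉ B) (htaut : IsTaut B) (c : ℕ) (hc : 1 ≤ c)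
    (η : ℝ) (hη : 0 < η) :
    ∃ T0, ∀ T ≥ T0, Dn (Btilde {a | a ≠ 1 ∧ c * a ∈ B} T) < η := by
  set A : Set ℕ := {a | a ≠ 1 ∧ c * a ∈ B} with hA
  have hA0 : 0 ∉ A := by
    intro h
    exact hB0 (by simpa using h.2)
  have hT0 : ∀ T, 0 ∉ Btilde A T := fun T h => hA0 h.1
  by_contra hcon
  push Not at hcon
  have hall : ∀ T, η ≤ Dn (Btilde A T) := by
    intro T
    obtain ⟨T', hT', h⟩ := hcon T
    refine h.trans (Dn_mono (hT0 T) ?_)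
    intro a ha
    exact ⟨ha.1, fun p hp hpa => lt_of_le_of_lt hT' (ha.2 p hp hpa)⟩
  have hone := zero_one A hA0 η hη hall
  -- A nonempty
  have hne : A.Nonempty := by
    obtain ⟨l, hl, h1⟩ := exists_lt_Dn (Btilde A 0) 0 (by rw [hone 0]; norm_num)
    cases l with
    | nil => simp [Vd] at h1
    | cons a l => exact ⟨a, (hl a (by simp)).1⟩
  obtain ⟨a0, ha0⟩ := hne
  have ha00 : a0 ≠ 0 := fun h => hA0 (h ▸ ha0)
  set A' := Btilde A a0 with hA'
  have hA'1 := hone a0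
  have hlt := htaut (c * a0) ha0.2
  obtain ⟨C, hC, hCZ⟩ := Zp_le
  refine absurd hlt (not_lt.2 ?_)
  apply logDensLow_le_of
  intro ε hε
  obtain ⟨l, hl, hl1⟩ := exists_lt_Dn A' (1 - ε / C) (by rw [hA'1]; have := div_pos hε hC; linarith)
  filter_upwards [hCZ, Hs_compl_le l (ne_zero_of (hT0 _) hl),
    tendsto_log_nat.eventually_ge_atTop 1] with x hx1 hx2 hx3
  have hsub : Hs (multiplesZ B) x ≤ Hs (multiplesZ (B \ {c * a0}) ∪ {m | ∃ k ∈ (Ml l)ᶜ, m = c * k}) x := by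
    apply Hs_mono
    rintro k hk1 hk2 ⟨b, hb, hbk⟩
    by_cases hk : (k : ℤ) ∈ multiplesZ (B \ {c * a0})
    · exact Or.inl hk
    · right
      have hbe : b = c * a0 := by
        by_contra hne
        exact hk ⟨b, ⟨hb, hne⟩, hbk⟩
      subst hbe
      obtain ⟨t, ht⟩ := hbk
      refine ⟨a0 * t, ?_, by rw [ht]; push_cast; ring⟩
      rintro ⟨a, ha, hat⟩
      apply hk
      have haA := hl a ha
      refine ⟨c * a, ⟨haA.1.2, ?_⟩, ?_⟩
      · intro heq
        have h1 : a = a0 := Nat.eq_of_mul_eq_mul_left hc heq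
        subst h1
        have h2 := haA.2 _ (Nat.minFac_prime haA.1.1) (Nat.minFac_dvd a)
        have h3 := Nat.minFac_le (Nat.pos_of_ne_zero ha00)
        omega
      · rw [ht]; push_cast; rw [mul_assoc]
        exact mul_dvd_mul_left _ hat
  have h1 := hsub.trans (Hs_union_le _ _ x)
  have h2 := Hs_scale c hc (Ml l)ᶜ x
  have h3 : Zp x * Vd l 1 ≤ (C * Real.log x) * (ε / C) := by
    apply mul_le_mul hx1 (by linarith) (Vd_nonneg l (ne_zero_of (hT0 _) hl)) (by positivity)
  have h4 : (C * Real.log x) * (ε / C) = ε * Real.log x := by field_simp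
  rw [logWeight_eq, logWeight_eq]
  have hlp : 0 < Real.log x := by linarith
  rw [inv_mul_le_iff₀ hlp, mul_add, mul_inv_cancel_left₀ hlp.ne']
  linarith

/-- bounded deviation from `d log x` -/
def BD (S : Set ℤ) (d : ℝ) : Prop := ∃ C : ℝ, ∀ x : ℕ, 1 ≤ x → |Hs S x - d * Real.log x| ≤ C

lemma Hs_succ (S : Set ℤ) (x : ℕ) : Hs S (x + 1) = Hs S x +
    if ((x + 1 : ℕ) : ℤ) ∈ S then ((x + 1 : ℕ) : ℝ)⁻¹ else 0 := by
  unfold Hs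
  rw [Finset.sum_Icc_succ_top (by omega)]

lemma Hs_shift_aux (S : Set ℤ) (x : ℕ) :
    Hs S (x + 1) - 1 ≤ Hs {k | k + 1 ∈ S} x ∧
    Hs {k | k + 1 ∈ S} x ≤ Hs S (x + 1) + 1 - ((x + 1 : ℕ) : ℝ)⁻¹ := by
  induction x with
  | zero =>
    have h := Hs_nonneg S 1
    have h2 := Hs_le S 1
    have h3 : Hs {k | k + 1 ∈ S} 0 = 0 := by simp [Hs]
    rw [h3, zero_add]
    norm_num at h2 ⊢
    constructor <;> linarith
  | succ x ih =>
    rw [Hs_succ S (x + 1), Hs_succ {k : ℤ | k + 1 ∈ S} x]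
    have h1 : (((x + 1 : ℕ) : ℤ) ∈ {k : ℤ | k + 1 ∈ S}) ↔ ((x + 1 + 1 : ℕ) : ℤ) ∈ S := by
      simp
    have h2 : ((x + 1 + 1 : ℕ) : ℝ)⁻¹ ≤ ((x + 1 : ℕ) : ℝ)⁻¹ := by
      apply inv_anti₀
      · positivity
      · push_cast; linarith
    simp only [h1]
    split_ifs
    · constructor <;> linarith
    · constructor <;> linarith

lemma Hs_shift (S : Set ℤ) (x : ℕ) : |Hs {k | k + 1 ∈ S} x - Hs S x| ≤ 2 := by
  obtain ⟨h1, h2⟩ := Hs_shift_aux S x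
  rw [Hs_succ] at h1 h2
  have h3 : ((x + 1 : ℕ) : ℝ)⁻¹ ≤ 1 := by
    apply inv_le_one_of_one_le₀
    push_cast
    linarith [Nat.cast_nonneg (α := ℝ) x]
  have h4 : 0 ≤ ((x + 1 : ℕ) : ℝ)⁻¹ := by positivity
  rw [abs_le]
  split_ifs at h1 h2 <;> constructor <;> linarith

lemma Hs_shift_n (S : Set ℤ) (x i : ℕ) : |Hs {k | k + i ∈ S} x - Hs S x| ≤ 2 * i := by
  induction i with
  | zero => simp
  | succ i ih =>
    have h := Hs_shift {k : ℤ | k + i ∈ S} x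
    have he : {k : ℤ | k + 1 ∈ {k : ℤ | k + i ∈ S}} = {k : ℤ | k + (i + 1 : ℕ) ∈ S} := by
      ext k
      simp only [mem_ofPred_eq]
      push_cast
      rw [add_assoc, add_comm (1 : ℤ)]
    rw [he] at h
    push_cast
    rw [abs_le] at *
    push_cast at h
    constructor <;> linarith [ih.1, ih.2, h.1, h.2]

lemma BD_sub {S S' S'' : Set ℤ} {d d' : ℝ} (h : BD S d) (h' : BD S' d')
    (he : ∀ x, Hs S'' x = Hs S x - Hs S' x) : BD S'' (d - d') := by
  obtain ⟨C, hC⟩ := h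
  obtain ⟨C', hC'⟩ := h'
  refine ⟨C + C', fun x hx => ?_⟩
  have h1 := hC x hx
  have h2 := hC' x hx
  rw [he x]
  rw [abs_le] at *
  constructor <;> linarith [h1.1, h1.2, h2.1, h2.2]

lemma sum_Hs_classes (q : ℕ) (hq : 0 < q) (a : ℤ) (x : ℕ) :
    ∑ j ∈ Finset.range q, Hs {k : ℤ | k + j ≡ a [ZMOD q]} x = Hs univ x := by
  unfold Hs
  rw [Finset.sum_comm]
  apply Finset.sum_congr rfl
  intro k _
  simp only [mem_univ, if_true, mem_ofPred_eq]
  have hq' : (q : ℤ) ≠ 0 := by positivity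
  have hnn := Int.emod_nonneg (a - k) hq'
  have hlt := Int.emod_lt_of_pos (a - k) (by positivity : (0 : ℤ) < q)
  rw [Finset.sum_eq_single ((a - k) % q).toNat]
  · rw [if_pos]
    rw [Int.toNat_of_nonneg hnn]
    have : (k : ℤ) + (a - k) % q ≡ k + (a - k) [ZMOD q] := Int.ModEq.add_left _ (Int.mod_modEq _ _)
    simpa using this
  · intro j hj hne
    rw [if_neg]
    intro hmod
    apply hne
    have h1 : (j : ℤ) ≡ a - k [ZMOD q] := by
      have := Int.ModEq.sub_right (k : ℤ) hmod
      simpa using this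
    have h2 : (j : ℤ) % q = j := Int.emod_eq_of_lt (by positivity) (by exact_mod_cast Finset.mem_range.1 hj)
    rw [Int.ModEq, h2] at h1
    omega
  · intro h
    exfalso
    apply h
    rw [Finset.mem_range]
    omega

lemma BD_class (q : ℕ) (hq : 0 < q) (a : ℤ) : BD {k : ℤ | k ≡ a [ZMOD q]} (q : ℝ)⁻¹ := by
  refine ⟨2 * q + 1, fun x hx => ?_⟩
  set S := {k : ℤ | k ≡ a [ZMOD q]} with hS
  have h1 := sum_Hs_classes q hq a x
  have hq1 : (1 : ℝ) ≤ q := by exact_mod_cast hq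
  have h2 : |Hs univ x - q * Hs S x| ≤ q * (2 * q) := by
    rw [← h1]
    have : ∑ j ∈ Finset.range q, Hs {k : ℤ | k + j ≡ a [ZMOD q]} x - q * Hs S x =
        ∑ j ∈ Finset.range q, (Hs {k : ℤ | k + j ∈ S} x - Hs S x) := by
      rw [Finset.sum_sub_distrib]; simp [hS]
    rw [this]
    refine (Finset.abs_sum_le_sum_abs _ _).trans ?_
    have := Finset.sum_le_card_nsmul (Finset.range q)
      (fun j : ℕ => |Hs {k : ℤ | k + j ∈ S} x - Hs S x|) (2 * q) (by
      intro j hj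
      refine (Hs_shift_n S x j).trans ?_
      have : (j : ℝ) ≤ q := by exact_mod_cast (Finset.mem_range.1 hj).le
      linarith)
    simpa using this
  have h3 := Hs_univ_le x
  have h4 := le_Hs_univ x hx
  have h5 : |(q : ℝ) * (Hs S x - (q : ℝ)⁻¹ * Real.log x)| ≤ q * (2 * q + 1) := by
    rw [mul_sub, mul_inv_cancel_left₀ (by positivity)]
    rw [abs_le] at *
    constructor <;> nlinarith [h2.1, h2.2]
  rw [abs_mul, abs_of_pos (by linarith : (0 : ℝ) < q)] at h5
  exact le_of_mul_le_mul_left h5 (by linarith)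

lemma BD_V (Q : ℕ) (hQ : 0 < Q) (a : ℕ) (l : List ℕ) :
    (∀ b ∈ l, b ≠ 0 ∧ b.Coprime Q) → ∀ q : ℕ, q ≠ 0 → q.Coprime Q →
    BD {m : ℤ | m ≡ a [ZMOD Q] ∧ (q : ℤ) ∣ m ∧ m ∉ Ml l} (Vd l q * (Q : ℝ)⁻¹) := by
  induction l with
  | nil =>
    intro _ q hq0 hq
    obtain ⟨a', ha1, ha2⟩ := Nat.chineseRemainder hq.symm a 0
    have h := BD_class (Q * q) (by positivity) a'
    have he : {k : ℤ | k ≡ a' [ZMOD (Q * q : ℕ)]} =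
        {m : ℤ | m ≡ a [ZMOD Q] ∧ (q : ℤ) ∣ m ∧ m ∉ Ml []} := by
      ext m
      have h1 : (a' : ℤ) ≡ a [ZMOD Q] := Int.natCast_modEq_iff.2 ha1
      have h2 : (a' : ℤ) ≡ 0 [ZMOD q] := by
        have := Int.natCast_modEq_iff.2 ha2; simpa using this
      simp only [mem_ofPred_eq]
      push_cast
      rw [← Int.modEq_and_modEq_iff_modEq_mul (by simpa using hq.symm)]
      constructor
      · rintro ⟨h3, h4⟩
        exact ⟨h3.trans h1, Int.modEq_zero_iff_dvd.1 (h4.trans h2), by simp [Ml, multiplesZ]⟩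
      · rintro ⟨h3, h4, _⟩
        exact ⟨h3.trans h1.symm, (Int.modEq_zero_iff_dvd.2 h4).trans h2.symm⟩
    rw [he] at h
    have hv : ((Q * q : ℕ) : ℝ)⁻¹ = Vd [] q * (Q : ℝ)⁻¹ := by
      simp [Vd, mul_comm]
    rw [hv] at h
    exact h
  | cons b l ih =>
    intro hl q hq0 hq
    have hb := hl b (by simp)
    have hl' : ∀ b ∈ l, b ≠ 0 ∧ b.Coprime Q := fun c hc => hl c (by simp [hc])
    have hlc : (Nat.lcm q b).Coprime Q :=
      Nat.Coprime.coprime_dvd_left (Nat.lcm_dvd_mul q b) (Nat.Coprime.mul_left hq hb.2)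
    have h1 := ih hl' q hq0 hq
    have h2 := ih hl' (Nat.lcm q b) (Nat.lcm_ne_zero hq0 hb.1) hlc
    rw [Vd, sub_mul]
    apply BD_sub h1 h2
    intro x
    unfold Hs
    rw [← Finset.sum_sub_distrib]
    apply Finset.sum_congr rfl
    intro k _
    simp only [mem_ofPred_eq, mem_Ml_nat, not_not, Int.natCast_dvd_natCast, Nat.lcm_dvd_iff, Fr,
      List.forall_mem_cons]
    by_cases h0 : (k : ℤ) ≡ a [ZMOD Q] <;> by_cases h1 : q ∣ k <;> by_cases h2 : b ∣ k <;>
      by_cases h3 : ∀ b ∈ l, ¬ b ∣ k <;> simp [h0, h1, h2, h3]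

lemma bad_le (Q : ℕ) (hQ : 0 < Q) (a i : ℕ) (A : Set ℕ) (hA0 : 0 ∉ A)
    (hA : ∀ b ∈ A, b.Coprime Q) (η : ℝ) (hη : Dn A < η) :
    ∀ᶠ x : ℕ in atTop, Hs {k : ℤ | k ≡ a [ZMOD Q] ∧ k + i ∈ multiplesZ A} x ≤
      η * (Q : ℝ)⁻¹ * Real.log x := by
  obtain ⟨C, hC, hCZ⟩ := Zp_le
  have hQi : (0 : ℝ) < (Q : ℝ)⁻¹ := by positivity
  set δ : ℝ := (η - Dn A) * (Q : ℝ)⁻¹ / 2 with hδ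
  have hδ0 : 0 < δ := by
    have := mul_pos (sub_pos.2 hη) hQi
    rw [hδ]; linarith
  obtain ⟨l, hl, hl1⟩ := exists_lt_Dn A (Dn A - δ / C) (by have := div_pos hδ0 hC; linarith)
  have hl0 := ne_zero_of hA0 hl
  have hd := le_Dn A hA0 l hl
  obtain ⟨C1, hC1⟩ := BD_class Q hQ ((a + i : ℕ) : ℤ)
  obtain ⟨C2, hC2⟩ := BD_V Q hQ (a + i) l (fun b hb => ⟨hl0 b hb, hA b (hl b hb)⟩) 1
    one_ne_zero (Nat.coprime_one_left Q)
  filter_upwards [hCZ, Hs_diff_le A hA0 l hl, eventually_ge_atTop 1,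
    tendsto_log_nat.eventually_ge_atTop ((C1 + C2 + 4 * i) / δ)] with x h1 h2 h3 h4
  have h5 := hC1 x h3
  have h6 := hC2 x h3
  have hlog : 0 ≤ Real.log x := Real.log_natCast_nonneg x
  set S1 : Set ℤ := {m : ℤ | m ≡ ((a + i : ℕ) : ℤ) [ZMOD Q] ∧ m ∈ Ml l}
  set S2 : Set ℤ := multiplesZ A \ Ml l
  have h7 : Hs S1 x = Hs {k : ℤ | k ≡ ((a + i : ℕ) : ℤ) [ZMOD Q]} x -
      Hs {m : ℤ | m ≡ ((a + i : ℕ) : ℤ) [ZMOD Q] ∧ ((1 : ℕ) : ℤ) ∣ m ∧ m ∉ Ml l} x := by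
    unfold Hs
    rw [← Finset.sum_sub_distrib]
    apply Finset.sum_congr rfl
    intro k _
    by_cases h0 : (k : ℤ) ≡ ((a + i : ℕ) : ℤ) [ZMOD Q] <;> by_cases h1 : (k : ℤ) ∈ Ml l <;>
      simp only [S1, mem_ofPred_eq, h0, h1] <;> simp
  have h8 : Hs {k : ℤ | k ≡ a [ZMOD Q] ∧ k + i ∈ multiplesZ A} x ≤
      Hs ({k : ℤ | k + i ∈ S1} ∪ {k : ℤ | k + i ∈ S2}) x := by
    apply Hs_mono
    rintro k _ _ ⟨hk1, hk2⟩
    by_cases hk : (k : ℤ) + i ∈ Ml l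
    · left
      refine ⟨?_, hk⟩
      push_cast
      exact hk1.add_right _
    · right
      exact ⟨hk2, hk⟩
  have h9 := h8.trans (Hs_union_le _ _ x)
  have h10 := Hs_shift_n S1 x i
  have h11 := Hs_shift_n S2 x i
  rw [abs_le] at h5 h6 h10 h11
  have h12 : Zp x * (Dn A - (1 - Vd l 1)) ≤ (C * Real.log x) * (δ / C) :=
    mul_le_mul h1 (by linarith) (by linarith) (by positivity)
  have h13 : (C * Real.log x) * (δ / C) = δ * Real.log x := by field_simp
  have h14 : C1 + C2 + 4 * i ≤ δ * Real.log x := by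
    rw [div_le_iff₀ hδ0] at h4; linarith
  have h15 : (1 - Vd l 1) * ((Q : ℝ)⁻¹ * Real.log x) ≤ Dn A * ((Q : ℝ)⁻¹ * Real.log x) := by
    apply mul_le_mul_of_nonneg_right hd (by positivity)
  have h16 : η * (Q : ℝ)⁻¹ * Real.log x = Dn A * ((Q : ℝ)⁻¹ * Real.log x) + 2 * (δ * Real.log x) := by
    rw [hδ]; ring
  have e1 := h5.2
  have e2 := h6.1
  have e3 := h10.2
  have e4 := h11.2
  clear h5 h6 h10 h11 h8 hC1 hC2 h4
  rw [h7] at e3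
  generalize Hs {k : ℤ | k ≡ ((a + i : ℕ) : ℤ) [ZMOD Q]} x = y1 at *
  generalize Hs {m : ℤ | m ≡ ((a + i : ℕ) : ℤ) [ZMOD Q] ∧ ((1 : ℕ) : ℤ) ∣ m ∧ m ∉ Ml l} x = y2 at *
  rw [h16]
  linarith

lemma Hs_biUnion_le {ι : Type} (s : Finset ι) (f : ι → Set ℤ) (x : ℕ) :
    Hs {k | ∃ t ∈ s, k ∈ f t} x ≤ ∑ t ∈ s, Hs (f t) x := by
  induction s using Finset.induction_on with
  | empty => simp [Hs]
  | insert t s ht ih =>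
    rw [Finset.sum_insert ht]
    have h1 : Hs {k | ∃ t' ∈ insert t s, k ∈ f t'} x ≤ Hs (f t ∪ {k | ∃ t ∈ s, k ∈ f t}) x := by
      apply Hs_mono
      rintro k _ _ ⟨t', ht', hk⟩
      rcases Finset.mem_insert.1 ht' with h | h
      · left; rw [← h]; exact hk
      · exact Or.inr ⟨t', h, hk⟩
    have h2 := Hs_union_le (f t) {k | ∃ t ∈ s, k ∈ f t} x
    linarith

/-- If `B` is taut, `B^(n) ⊆ A ⊆ B` and the block of `M_A` on `{r+1,…,r+n}` is `r + I`,
then the set of `k ∈ ℕ` at which `M_B` shows the block `k + I` on `{k+1,…,k+n}` has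
strictly positive lower logarithmic density. -/
theorem block_positive_density (B : Set ℕ) (hB0 : 0 ∉ B) (hprim : Primitive B)
    (htaut : IsTaut B) (n : ℕ) (hn : 0 < n) (A : Set ℕ) (hBnA : Bsmooth B n ⊆ A)
    (hAB : A ⊆ B) (r : ℕ) (hr : 0 < r) (I : Set ℕ) (hI : ∀ i ∈ I, i ∈ Finset.Icc 1 n)
    (hblock : ∀ i ∈ Finset.Icc 1 n, (((r : ℤ) + (i : ℤ)) ∈ multiplesZ A ↔ i ∈ I)) :
    0 < logDensLow {k : ℤ | 0 ≤ k ∧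
        ∀ i ∈ Finset.Icc 1 n, ((k + (i : ℤ)) ∈ multiplesZ B ↔ i ∈ I)} := by
  -- choice of witnesses
  have hex : ∀ i : ℕ, ∃ b : ℕ, b ≠ 0 ∧ b ∣ r + i ∧
      ((i ∈ I → b ∈ B) ∧ (i ∉ I → b = 1)) := by
    intro i
    by_cases hi : i ∈ I
    · obtain ⟨b, hbA, hb⟩ := (hblock i (hI i hi)).2 hi
      have hbB := hAB hbA
      refine ⟨b, fun h => hB0 (h ▸ hbB), by exact_mod_cast hb, fun _ => hbB, fun h => absurd hi h⟩
    · exact ⟨1, one_ne_zero, one_dvd _, fun h => absurd h hi, fun _ => rfl⟩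
  choose w hw0 hwd hwI using hex
  set e := r + n + 1 with he
  set L : ℕ := n.factorial ^ e * ∏ i ∈ Finset.Icc 1 n, w i with hL
  have hL0 : 0 < L := Nat.mul_pos (pow_pos (Nat.factorial_pos n) _)
    (Finset.prod_pos fun i _ => Nat.pos_of_ne_zero (hw0 i))
  have hwL : ∀ i ∈ Finset.Icc 1 n, w i ∣ L := fun i hi =>
    (Finset.dvd_prod_of_mem w hi).mul_left _
  -- large primes of L
  have fact1 : ∀ p : ℕ, p.Prime → n < p → p ∣ L → ∀ i ∈ Finset.Icc 1 n, i ∉ I → ¬ p ∣ r + i := by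
    intro p hp hnp hpL i hi hiI hpi
    rcases (hp.dvd_mul).1 hpL with h | h
    · have := (hp.dvd_factorial).1 (hp.dvd_of_dvd_pow h)
      omega
    · obtain ⟨j, hj, hpj⟩ := (hp.prime.dvd_finset_prod_iff _).1 h
      have hji : j ≠ i := by
        rintro rfl
        rw [(hwI j).2 hiI] at hpj
        exact hp.one_lt.ne' (Nat.dvd_one.1 hpj)
      have hpj' := hpj.trans (hwd j)
      rw [Finset.mem_Icc] at hi hj
      rcases lt_or_gt_of_ne hji with h | h
      · have := Nat.le_of_dvd (by omega) (Nat.dvd_sub hpi hpj')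
        omega
      · have := Nat.le_of_dvd (by omega) (Nat.dvd_sub hpj' hpi)
        omega
  -- prime factors of the cofactor
  have fact2 : ∀ b ∈ B, ∀ i ∈ Finset.Icc 1 n, i ∉ I → Nat.gcd b L ∣ r + i →
      ∀ p : ℕ, p.Prime → p ∣ b / Nat.gcd b L → n < p ∧ ¬ p ∣ L := by
    intro b hb i hi hiI hc p hp hpa
    have hb0 : b ≠ 0 := fun h => hB0 (h ▸ hb)
    have hpb : p ∣ b := hpa.trans (Nat.div_dvd_of_dvd (Nat.gcd_dvd_left b L))
    have hnp : n < p := by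
      by_contra hnp
      push Not at hnp
      have hpe : p ^ e ∣ L := (pow_dvd_pow_of_dvd ((hp.dvd_factorial).2 hnp) e).mul_right _
      have hcop : (b / Nat.gcd b L).Coprime (L / Nat.gcd b L) :=
        Nat.coprime_div_gcd_div_gcd (Nat.gcd_pos_of_pos_right _ hL0)
      have hcop2 : (p ^ e).Coprime (L / Nat.gcd b L) :=
        Nat.Coprime.pow_left e (Nat.Coprime.coprime_dvd_left hpa hcop)
      rw [← Nat.mul_div_cancel' (Nat.gcd_dvd_right b L)] at hpe
      have h1 := (hcop2.dvd_of_dvd_mul_right hpe).trans hc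
      have h2 := Nat.le_of_dvd (by omega) h1
      have h3 : e < p ^ e := Nat.lt_pow_self hp.one_lt
      rw [Finset.mem_Icc] at hi
      omega
    refine ⟨hnp, fun hpL => fact1 p hp hnp hpL i hi hiI ((Nat.dvd_gcd hpb hpL).trans hc)⟩
  have fact3 : ∀ b ∈ B, ∀ i ∈ Finset.Icc 1 n, i ∉ I → Nat.gcd b L ∣ r + i →
      b / Nat.gcd b L ≠ 1 := by
    intro b hb i hi hiI hc h1
    have hbc : b = Nat.gcd b L := by
      have h2 := Nat.mul_div_cancel' (Nat.gcd_dvd_left b L)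
      rw [h1, mul_one] at h2
      exact h2.symm
    have hbL : b ∣ L := (dvd_of_eq hbc).trans (Nat.gcd_dvd_right b L)
    rw [← hbc] at hc
    have hbs : b ∈ Bsmooth B n := by
      refine ⟨hb, fun p hp hpb => ?_⟩
      by_contra hnp
      push Not at hnp
      exact fact1 p hp hnp (hpb.trans hbL) i hi hiI (hpb.trans hc)
    exact hiI ((hblock i hi).1 ⟨b, hBnA hbs, by exact_mod_cast hc⟩)
  -- choice of T
  set Ac : ℕ → Set ℕ := fun c => {a | a ≠ 1 ∧ c * a ∈ B} with hAc
  set K : ℕ := n * L.divisors.card with hK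
  have hK0 : 0 < K := Nat.mul_pos hn (Finset.card_pos.2 ⟨1, by simp [hL0.ne']⟩)
  set η : ℝ := 1 / (2 * K) with hη
  have hKr : (0 : ℝ) < K := by exact_mod_cast hK0
  have hη0 : 0 < η := by positivity
  have hT : ∀ᶠ T : ℕ in atTop, ∀ c ∈ L.divisors, Dn (Btilde (Ac c) T) < η := by
    rw [Filter.eventually_all_finset]
    intro c hc
    obtain ⟨T0, hT0⟩ := taut_tail B hB0 htaut c (Nat.pos_of_mem_divisors hc) η hη0
    exact eventually_atTop.2 ⟨T0, hT0⟩
  obtain ⟨T, hT1, hT2, hT3⟩ := (hT.and ((eventually_ge_atTop L).and (eventually_ge_atTop n))).exists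
  set R : ℕ := ∏ p ∈ (Nat.primesLE T).filter (fun p => ¬ p ∣ L), p with hR
  have hRp : ∀ p : ℕ, p.Prime → (p ∣ R ↔ p ≤ T ∧ ¬ p ∣ L) := by
    intro p hp
    rw [hR, hp.prime.dvd_finset_prod_iff]
    constructor
    · rintro ⟨q, hq, hpq⟩
      rw [Finset.mem_filter, Nat.mem_primesLE] at hq
      rw [(Nat.prime_dvd_prime_iff_eq hp hq.1.2).1 hpq]
      exact ⟨hq.1.1, hq.2⟩
    · rintro ⟨h1, h2⟩
      exact ⟨p, by rw [Finset.mem_filter, Nat.mem_primesLE]; exact ⟨⟨h1, hp⟩, h2⟩, dvd_rfl⟩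
  have hR0 : 0 < R := Finset.prod_pos fun p hp => by
    rw [Finset.mem_filter, Nat.mem_primesLE] at hp
    exact hp.1.2.pos
  have hLR : L.Coprime R := by
    apply Nat.coprime_of_dvd
    intro p hp h1 h2
    exact ((hRp p hp).1 h2).2 h1
  obtain ⟨a, ha1, ha2⟩ := Nat.chineseRemainder hLR r 0
  set Q : ℕ := L * R with hQ
  have hQ0 : 0 < Q := Nat.mul_pos hL0 hR0
  have hcop : ∀ c, ∀ b ∈ Btilde (Ac c) T, b.Coprime Q := by
    intro c b hb
    apply Nat.coprime_of_dvd
    intro p hp hpb hpQ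
    have h1 := hb.2 p hp hpb
    rcases hp.dvd_mul.1 hpQ with h | h
    · have := Nat.le_of_dvd hL0 h
      omega
    · have := ((hRp p hp).1 h).1
      omega
  have hA0 : ∀ c, 0 ∉ Btilde (Ac c) T := by
    intro c h
    exact hB0 (by simpa using h.1.2)
  set G : Set ℤ := {k : ℤ | 0 ≤ k ∧
        ∀ i ∈ Finset.Icc 1 n, ((k + (i : ℤ)) ∈ multiplesZ B ↔ i ∈ I)} with hG
  set bad : ℕ × ℕ → Set ℤ := fun t =>
    {k : ℤ | k ≡ a [ZMOD Q] ∧ k + (t.1 : ℕ) ∈ multiplesZ (Btilde (Ac t.2) T)} with hbad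
  set s : Finset (ℕ × ℕ) := Finset.Icc 1 n ×ˢ L.divisors with hs
  have hcard : s.card = K := by simp [hs, hK]
  have hcover : ∀ k : ℕ, (k : ℤ) ≡ a [ZMOD Q] → (k : ℤ) ∈ G ∪ {k | ∃ t ∈ s, k ∈ bad t} := by
    intro k hk
    by_cases hkb : (k : ℤ) ∈ {k | ∃ t ∈ s, k ∈ bad t}
    · exact Or.inr hkb
    left
    have hkN : k ≡ a [MOD Q] := Int.natCast_modEq_iff.1 hk
    have hkL : k ≡ r [MOD L] := (hkN.of_mul_right R).trans ha1
    have hkR : R ∣ k := (Nat.modEq_zero_iff_dvd).1 ((hkN.of_mul_left L).trans ha2)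
    refine ⟨by positivity, fun i hi => ⟨?_, ?_⟩⟩
    · rintro ⟨b, hb, hbk⟩
      have hbk' : b ∣ k + i := by exact_mod_cast hbk
      by_contra hiI
      set c := Nat.gcd b L with hc
      have hcL : c ∣ L := Nat.gcd_dvd_right b L
      have hcb : c ∣ b := Nat.gcd_dvd_left b L
      have hcri : c ∣ r + i :=
        (((hkL.add_right i).of_dvd hcL).dvd_iff dvd_rfl).1 (hcb.trans hbk')
      have hmul : c * (b / c) = b := Nat.mul_div_cancel' hcb
      apply hkb
      refine ⟨(i, c), by simp only [hs, Finset.mem_product, Nat.mem_divisors]; exact ⟨hi, hcL, hL0.ne'⟩,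
        hk, b / c, ⟨⟨fact3 b hb i hi hiI hcri, by rw [hmul]; exact hb⟩, ?_⟩, ?_⟩
      · intro p hp hpa
        obtain ⟨h1, h2⟩ := fact2 b hb i hi hiI hcri p hp hpa
        by_contra hpT
        push Not at hpT
        have hpk : p ∣ k := ((hRp p hp).2 ⟨hpT, h2⟩).trans hkR
        have hpki : p ∣ k + i := hpa.trans ((Nat.div_dvd_of_dvd hcb).trans hbk')
        have hpi : p ∣ i := (Nat.dvd_add_right hpk).1 hpki
        rw [Finset.mem_Icc] at hi
        have := Nat.le_of_dvd (by omega) hpi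
        omega
      · have : b / c ∣ k + i := (Nat.div_dvd_of_dvd hcb).trans hbk'
        exact_mod_cast this
    · intro hiI
      refine ⟨w i, (hwI i).1 hiI, ?_⟩
      have : w i ∣ k + i :=
        (((hkL.add_right i).of_dvd (hwL i hi)).dvd_iff dvd_rfl).2 (hwd i)
      exact_mod_cast this
  obtain ⟨C, hC⟩ := BD_class Q hQ0 (a : ℤ)
  have hev : ∀ᶠ x : ℕ in atTop, ∀ t ∈ s, Hs (bad t) x ≤ η * (Q : ℝ)⁻¹ * Real.log x := by
    rw [Filter.eventually_all_finset]
    intro t ht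
    have ht2 : t.2 ∈ L.divisors := (Finset.mem_product.1 ht).2
    exact bad_le Q hQ0 a t.1 _ (hA0 t.2) (hcop t.2) η (hT1 t.2 ht2)
  have hQi : (0 : ℝ) < (Q : ℝ)⁻¹ := by positivity
  refine lt_of_lt_of_le (by positivity : (0 : ℝ) < (Q : ℝ)⁻¹ / 4) ?_
  apply le_logDensLow
  filter_upwards [hev, eventually_ge_atTop 1, tendsto_log_nat.eventually_ge_atTop (C / ((Q : ℝ)⁻¹ / 4)),
    tendsto_log_nat.eventually_ge_atTop 1] with x h1 h2 h3 h4
  have h5 := (abs_le.1 (hC x h2)).1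
  have h6 : Hs {k : ℤ | k ≡ a [ZMOD Q]} x ≤ Hs (G ∪ {k | ∃ t ∈ s, k ∈ bad t}) x :=
    Hs_mono x (fun k _ _ hk => hcover k hk)
  have h7 := h6.trans (Hs_union_le _ _ x)
  have h8 := Hs_biUnion_le s bad x
  have h9 : ∑ t ∈ s, Hs (bad t) x ≤ K * (η * (Q : ℝ)⁻¹ * Real.log x) := by
    have := Finset.sum_le_card_nsmul s (fun t => Hs (bad t) x) _ h1
    rw [hcard, nsmul_eq_mul] at this
    exact this
  have h10 : K * (η * (Q : ℝ)⁻¹ * Real.log x) = (Q : ℝ)⁻¹ * Real.log x / 2 := by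
    rw [hη]; field_simp
  have h11 : C ≤ Real.log x * ((Q : ℝ)⁻¹ / 4) := (div_le_iff₀ (by positivity)).1 h3
  rw [logWeight_eq, le_inv_mul_iff₀ (by linarith)]
  linarith
end
end

section
/- Suppose the primitive set ℬ ⊆ ℕ is taut. Then every finite block of η occurs in η with strictly positive frequency: for every r ∈ ℤ and n ∈ ℕ, the set {k ∈ ℕ : η(k+i) = η(r+i) for all i = 1,…,n} has strictly positive lower logarithmic density. (This is the statement that the Mirsky measure ν_η, for which η is quasi-generic, has full topological support in X_η.) -/
open Filter Set Topology MeasureTheory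

open scoped Classical

noncomputable section

/-! ### Mertens-type upper bound -/

def mR (n : ℕ) : ℝ := ∑ p ∈ (Finset.Icc 1 n).filter Nat.Prime, Real.log p / p

def mU (n : ℕ) : ℝ := ∑ p ∈ (Finset.Icc 1 n).filter Nat.Prime, (1 : ℝ) / p

lemma prime_pow_div_dvd_factorial (p n : ℕ) (hp : p.Prime) : n / p ≤ (n.factorial).factorization p := by
  have h1 : p ^ (n / p) ∣ n.factorial := by
    have h2 : p ^ (n/p) * (n/p).factorial ∣ (p * (n/p)).factorial := by
      generalize n / p = m
      induction m with
      | zero => simp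
      | succ m ih =>
        have : (p * m).factorial * (p * (m+1)) ∣ (p * (m+1)).factorial := by
          obtain ⟨q, rfl⟩ : ∃ q, p = q + 1 := ⟨p - 1, by have := hp.pos; omega⟩
          have e : (q+1) * (m+1) = ((q+1)*m + q) + 1 := by ring
          rw [e, Nat.factorial_succ, mul_comm]
          exact mul_dvd_mul_left _ (Nat.factorial_dvd_factorial (by omega))
        refine dvd_trans ?_ this
        rw [Nat.factorial_succ, pow_succ]
        obtain ⟨c, hc⟩ := ih
        exact ⟨c, by rw [hc]; ring⟩
    exact (dvd_of_mul_right_dvd h2).trans (Nat.factorial_dvd_factorial (Nat.mul_div_le n p))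
  exact (hp.pow_dvd_iff_le_factorization (Nat.factorial_ne_zero n)).1 h1

lemma mR_le (n : ℕ) (hn : 1 ≤ n) : mR n ≤ Real.log n + Real.log 4 := by
  have hfac : Real.log (n.factorial) = ∑ p ∈ (Finset.Icc 1 n).filter Nat.Prime,
      ((n.factorial).factorization p : ℝ) * Real.log p := by
    rw [Real.log_nat_eq_sum_factorization, Finsupp.sum]
    apply Finset.sum_subset
    · intro p hp
      simp only [Nat.support_factorization, Nat.mem_primeFactors] at hp
      simp only [Finset.mem_filter, Finset.mem_Icc]
      exact ⟨⟨hp.1.pos, (hp.1.dvd_factorial).1 hp.2.1⟩, hp.1⟩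
    · intro p _ hp
      simp only [Finsupp.mem_support_iff, not_not] at hp
      simp [hp]
  have hle : Real.log (n.factorial) ≤ n * Real.log n := by
    rw [← Real.log_pow]
    apply Real.log_le_log (by exact_mod_cast n.factorial_pos)
    exact_mod_cast Nat.factorial_le_pow n
  have hth : ∑ p ∈ (Finset.Icc 1 n).filter Nat.Prime, Real.log p ≤ Real.log 4 * n := by
    have h := Chebyshev.theta_le_log4_mul_x (x := (n:ℝ)) (by positivity)
    rw [Chebyshev.theta_eq_sum_Icc] at h
    refine le_trans (le_of_eq ?_) h
    rw [Nat.floor_natCast]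
    apply Finset.sum_congr _ (fun _ _ => rfl)
    ext p
    simp only [Finset.mem_filter, Finset.mem_Icc]
    constructor
    · rintro ⟨⟨a, b⟩, c⟩; exact ⟨⟨by omega, b⟩, c⟩
    · rintro ⟨⟨a, b⟩, c⟩; exact ⟨⟨c.pos, b⟩, c⟩
  have key : n * mR n ≤ Real.log (n.factorial) +
      ∑ p ∈ (Finset.Icc 1 n).filter Nat.Prime, Real.log p := by
    rw [hfac, ← Finset.sum_add_distrib, mR, Finset.mul_sum]
    apply Finset.sum_le_sum
    intro p hp
    simp only [Finset.mem_filter, Finset.mem_Icc] at hp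
    have hl : 0 ≤ Real.log p := Real.log_natCast_nonneg p
    have h1 : (n:ℝ) / p ≤ (n.factorial).factorization p + 1 := by
      have h2 := prime_pow_div_dvd_factorial p n hp.2
      have h3 : (n:ℝ)/p < (n/p : ℕ) + 1 := by
        rw [← Nat.floor_div_eq_div (K := ℝ)]
        exact Nat.lt_floor_add_one _
      have h4 : ((n/p : ℕ) : ℝ) ≤ (n.factorial).factorization p := by exact_mod_cast h2
      linarith
    calc (n:ℝ) * (Real.log p / p) = (n/p) * Real.log p := by ring
      _ ≤ ((n.factorial).factorization p + 1) * Real.log p := by gcongr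
      _ = _ := by ring
  have hn0 : (0:ℝ) < n := by exact_mod_cast hn
  have : n * mR n ≤ n * (Real.log n + Real.log 4) := by linarith
  exact le_of_mul_le_mul_left this hn0

lemma mR_succ (n : ℕ) : mR (n+1) = mR n + (if (n+1).Prime then Real.log (n+1:ℕ) / (n+1:ℕ) else 0) := by
  unfold mR
  rw [Finset.sum_filter, Finset.sum_filter, Finset.sum_Icc_succ_top (by omega)]

lemma mU_succ (n : ℕ) : mU (n+1) = mU n + (if (n+1).Prime then (1:ℝ) / (n+1:ℕ) else 0) := by
  unfold mU
  rw [Finset.sum_filter, Finset.sum_filter, Finset.sum_Icc_succ_top (by omega)]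

lemma mU_le : ∃ C : ℝ, ∀ n : ℕ, 2 ≤ n → mU n ≤ Real.log (Real.log n) + C := by
  set c := Real.log 4
  have hc : 0 ≤ c := Real.log_nonneg (by norm_num)
  have hT : ∀ n : ℕ, 2 ≤ n → mU n - mR n / Real.log n ≤
      Real.log (Real.log n) - c / Real.log n + (mU 2 - mR 2 / Real.log 2
        - Real.log (Real.log 2) + c / Real.log 2) := by
    intro n hn
    induction n, hn using Nat.le_induction with
    | base => push_cast; linarith
    | succ n hn ih =>
      have h2 : (2:ℝ) ≤ n := by exact_mod_cast hn
      have l0 : 0 < Real.log n := Real.log_pos (by linarith)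
      have l1 : 0 < Real.log (n+1:ℕ) := Real.log_pos (by push_cast; linarith)
      have l2 : Real.log n ≤ Real.log (n+1:ℕ) := Real.log_le_log (by linarith) (by push_cast; linarith)
      have e : mU (n+1) - mR (n+1) / Real.log (n+1:ℕ) = mU n - mR n / Real.log (n+1:ℕ) := by
        rw [mU_succ, mR_succ]
        split_ifs
        · field_simp; ring
        · ring
      have hinv : 0 ≤ 1 / Real.log n - 1 / Real.log (n+1:ℕ) := by
        have := one_div_le_one_div_of_le l0 l2
        linarith
      have h3 : mR n * (1 / Real.log n - 1 / Real.log (n+1:ℕ)) ≤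
          (Real.log n + c) * (1 / Real.log n - 1 / Real.log (n+1:ℕ)) :=
        mul_le_mul_of_nonneg_right (mR_le n (by omega)) hinv
      have h4 : 1 - Real.log n / Real.log (n+1:ℕ) ≤ Real.log (Real.log (n+1:ℕ)) - Real.log (Real.log n) := by
        have := Real.log_le_sub_one_of_pos (div_pos l0 l1)
        rw [Real.log_div l0.ne' l1.ne'] at this
        linarith
      have h5 : Real.log n * (1 / Real.log n) = 1 := by field_simp
      have h6 : mR n * (1 / Real.log n - 1 / Real.log (n+1:ℕ)) = mR n / Real.log n - mR n / Real.log (n+1:ℕ) := by ring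
      have h7 : (Real.log n + c) * (1 / Real.log n - 1 / Real.log (n+1:ℕ)) =
         Real.log n * (1 / Real.log n) - Real.log n / Real.log (n+1:ℕ) + c / Real.log n - c / Real.log (n+1:ℕ) := by ring
      rw [e]
      linarith
  refine ⟨1 + (mU 2 - mR 2 / Real.log 2 - Real.log (Real.log 2) + c / Real.log 2), fun n hn => ?_⟩
  have h2 : (2:ℝ) ≤ n := by exact_mod_cast hn
  have l0 : 0 < Real.log n := Real.log_pos (by linarith)
  have h1 := hT n hn
  have h3 : mR n / Real.log n ≤ 1 + c / Real.log n := by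
    rw [div_le_iff₀ l0, add_mul, div_mul_cancel₀ _ l0.ne', one_mul]
    exact mR_le n (by omega)
  linarith

/-- Euler product over the primes below `y`. -/
def mZ (y : ℕ) : ℝ := ∏ p ∈ y.primesBelow, (1 - ((p:ℝ))⁻¹)⁻¹

lemma sum_inv_pm (n : ℕ) : ∑ p ∈ (Finset.Icc 1 n).filter Nat.Prime, (1:ℝ) / (p * (p-1)) ≤ 1 := by
  have h : ∀ n : ℕ, 1 ≤ n → ∑ p ∈ (Finset.Icc 1 n).filter Nat.Prime, (1:ℝ) / (p * (p-1)) ≤ 1 - 1 / n := by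
    intro n hn
    induction n, hn using Nat.le_induction with
    | base => simp [Nat.not_prime_one, Finset.filter_singleton]
    | succ n hn ih =>
      rw [Finset.sum_filter, Finset.sum_Icc_succ_top (by omega), ← Finset.sum_filter]
      have h1 : (1:ℝ) ≤ n := by exact_mod_cast hn
      have h2 : (1:ℝ) / ((n+1:ℕ) * ((n+1:ℕ) - 1)) = 1 / n - 1 / (n+1:ℕ) := by
        have hn0 : (n:ℝ) ≠ 0 := by linarith
        have hn1 : (n:ℝ) + 1 ≠ 0 := by linarith
        push_cast; rw [add_sub_cancel_right]; field_simp; ring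
      have h3 : (1:ℝ) / (n+1:ℕ) ≤ 1 / n := by
        apply one_div_le_one_div_of_le (by linarith); push_cast; linarith
      split_ifs
      · rw [h2]; linarith
      · linarith
  rcases Nat.eq_zero_or_pos n with rfl | hn
  · simp
  · have := h n hn
    have h2 : (0:ℝ) ≤ 1 / n := by positivity
    linarith

lemma mZ_le : ∃ C : ℝ, 0 < C ∧ ∀ n : ℕ, 2 ≤ n → mZ (n+1) ≤ C * Real.log n := by
  obtain ⟨C, hC⟩ := mU_le
  refine ⟨Real.exp (C + 1), Real.exp_pos _, fun n hn => ?_⟩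
  have h2 : (2:ℝ) ≤ n := by exact_mod_cast hn
  have l0 : 0 < Real.log n := Real.log_pos (by linarith)
  have hset : (n+1).primesBelow = (Finset.Icc 1 n).filter Nat.Prime := by
    ext p
    simp only [Nat.mem_primesBelow, Finset.mem_filter, Finset.mem_Icc]
    constructor
    · rintro ⟨a, b⟩; exact ⟨⟨b.pos, by omega⟩, b⟩
    · rintro ⟨a, b⟩; exact ⟨by omega, b⟩
  have h1 : mZ (n+1) ≤ Real.exp (∑ p ∈ (Finset.Icc 1 n).filter Nat.Prime, ((1:ℝ)/p + 1 / (p * (p-1)))) := by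
    rw [mZ, hset, Real.exp_sum]
    apply Finset.prod_le_prod
    · intro p hp
      have : (2:ℝ) ≤ p := by exact_mod_cast (Finset.mem_filter.1 hp).2.two_le
      have := inv_le_one_of_one_le₀ (by linarith : (1:ℝ) ≤ p)
      exact inv_nonneg.2 (by linarith)
    · intro p hp
      have : (2:ℝ) ≤ p := by exact_mod_cast (Finset.mem_filter.1 hp).2.two_le
      have hp1 : (p:ℝ) - 1 ≠ 0 := by linarith
      have hp0 : (p:ℝ) ≠ 0 := by linarith
      have e : (1 - ((p:ℝ))⁻¹)⁻¹ = ((1:ℝ)/p + 1 / (p * (p-1))) + 1 := by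
        have : 1 - ((p:ℝ))⁻¹ = (p - 1)/p := by field_simp
        rw [this, inv_div]; field_simp; ring
      rw [e]
      exact Real.add_one_le_exp _
  refine h1.trans ?_
  rw [Finset.sum_add_distrib]
  have h3 := hC n hn
  have h4 := sum_inv_pm n
  have h5 : ∑ p ∈ (Finset.Icc 1 n).filter Nat.Prime, ((1:ℝ)/p) = mU n := rfl
  rw [h5]
  calc Real.exp (mU n + _) ≤ Real.exp ((C+1) + Real.log (Real.log n)) := Real.exp_le_exp.2 (by linarith)
    _ = _ := by rw [Real.exp_add, Real.exp_log l0]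

lemma mZ_hasSum (y : ℕ) :
    HasSum (y.smoothNumbers.indicator (fun n : ℕ => ((n:ℝ))⁻¹)) (mZ y) := by
  let f : ℕ →* ℝ := { toFun := fun n => ((n:ℝ))⁻¹, map_one' := by simp, map_mul' := by intro a b; simp [mul_comm] }
  have h := (EulerProduct.summable_and_hasSum_smoothNumbers_prod_primesBelow_geometric (f := f) (by
    intro p hp
    have : (2:ℝ) ≤ p := by exact_mod_cast hp.two_le
    change ‖((p:ℝ))⁻¹‖ < 1
    rw [Real.norm_of_nonneg (by positivity)]
    exact inv_lt_one_of_one_lt₀ (by linarith)) y).2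
  exact hasSum_subtype_iff_indicator.1 h

/-! ### Sets of multiples in `ℕ` and natural densities with bounded error -/

def MN (S : Set ℕ) : Set ℕ := {n | ∃ b ∈ S, b ∣ n}

def cnt (X : Set ℕ) (n : ℕ) : ℕ := ((Finset.Icc 1 n).filter (· ∈ X)).card

def ND (X : Set ℕ) (x : ℝ) : Prop := ∃ C : ℝ, ∀ n : ℕ, |(cnt X n : ℝ) - x * n| ≤ C

def scale (a : ℕ) (X : Set ℕ) : Set ℕ := {n | ∃ m ∈ X, n = a * m}

lemma MN_mono {S T : Set ℕ} (h : S ⊆ T) : MN S ⊆ MN T := by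
  rintro n ⟨b, hb, hn⟩; exact ⟨b, h hb, hn⟩

lemma MN_empty : MN ∅ = ∅ := by
  ext n; simp [MN]

lemma cnt_mono {X Y : Set ℕ} (h : X ⊆ Y) (n : ℕ) : cnt X n ≤ cnt Y n := by
  apply Finset.card_le_card
  intro k hk
  rw [Finset.mem_filter] at hk ⊢
  exact ⟨hk.1, h hk.2⟩

lemma cnt_union {X Y : Set ℕ} (h : Disjoint X Y) (n : ℕ) : cnt (X ∪ Y) n = cnt X n + cnt Y n := by
  unfold cnt
  rw [← Finset.card_union_of_disjoint]
  · congr 1; ext k; simp only [Finset.mem_filter, Finset.mem_union, Set.mem_union]; tauto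
  · rw [Finset.disjoint_left]
    intro k hk hk'
    rw [Finset.mem_filter] at hk hk'
    exact Set.disjoint_left.1 h hk.2 hk'.2

lemma cnt_univ (n : ℕ) : cnt univ n = n := by simp [cnt]

lemma cnt_empty (n : ℕ) : cnt ∅ n = 0 := by simp [cnt]

lemma cnt_scale {a : ℕ} (ha : 0 < a) (X : Set ℕ) (n : ℕ) : cnt (scale a X) n = cnt X (n / a) := by
  unfold cnt
  rw [← Finset.card_image_of_injective ((Finset.Icc 1 (n/a)).filter (· ∈ X))
    (f := fun m => a * m) (fun x y h => Nat.eq_of_mul_eq_mul_left ha h)]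
  congr 1
  ext k
  have hsc : k ∈ scale a X ↔ ∃ m ∈ X, k = a * m := Iff.rfl
  simp only [Finset.mem_filter, Finset.mem_Icc, Finset.mem_image, hsc]
  constructor
  · rintro ⟨⟨h1, h2⟩, m, hm, rfl⟩
    refine ⟨m, ⟨⟨Nat.pos_of_ne_zero ?_, ?_⟩, hm⟩, rfl⟩
    · rintro rfl; simp at h1
    · rw [Nat.le_div_iff_mul_le ha]; linarith
  · rintro ⟨m, ⟨⟨h1, h2⟩, hm⟩, rfl⟩
    refine ⟨⟨Nat.mul_pos ha h1, ?_⟩, m, hm, rfl⟩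
    rw [Nat.le_div_iff_mul_le ha] at h2; linarith

lemma ND_empty : ND ∅ 0 := ⟨0, fun n => by simp [cnt_empty]⟩

lemma ND_univ : ND univ 1 := ⟨0, fun n => by simp [cnt_univ]⟩

lemma ND_union {X Y : Set ℕ} {x y : ℝ} (h : Disjoint X Y) (hX : ND X x) (hY : ND Y y) :
    ND (X ∪ Y) (x + y) := by
  obtain ⟨C, hC⟩ := hX
  obtain ⟨D, hD⟩ := hY
  refine ⟨C + D, fun n => ?_⟩
  have h1 := abs_le.1 (hC n)
  have h2 := abs_le.1 (hD n)
  rw [cnt_union h]; push_cast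
  rw [abs_le]; constructor <;> linarith

lemma ND_diff {X E : Set ℕ} {x e : ℝ} (h : X ⊆ E) (hX : ND X x) (hE : ND E e) :
    ND (E \ X) (e - x) := by
  obtain ⟨C, hC⟩ := hX
  obtain ⟨D, hD⟩ := hE
  refine ⟨C + D, fun n => ?_⟩
  have h1 := abs_le.1 (hC n)
  have h2 := abs_le.1 (hD n)
  have h3 := cnt_union (X := X) (Y := E \ X) ((disjoint_sdiff_right : Disjoint X (E \ X))) n
  rw [Set.union_sdiff_cancel h] at h3
  rw [h3] at h2; push_cast at h2
  rw [abs_le]; constructor <;> linarith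

lemma ND_compl {X : Set ℕ} {x : ℝ} (hX : ND X x) : ND Xᶜ (1 - x) := by
  rw [Set.compl_eq_univ_sdiff]; exact ND_diff (subset_univ _) hX ND_univ

lemma ND_scale {a : ℕ} (ha : 0 < a) {X : Set ℕ} {x : ℝ} (hX : ND X x) : ND (scale a X) (x / a) := by
  obtain ⟨C, hC⟩ := hX
  refine ⟨C + |x|, fun n => ?_⟩
  rw [cnt_scale ha]
  have h1 := hC (n / a)
  have ha' : (0:ℝ) < a := by exact_mod_cast ha
  have h2 : |x * ((n/a : ℕ) : ℝ) - x / a * n| ≤ |x| := by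
    have : x * ((n/a : ℕ) : ℝ) - x / a * n = x * (((n/a : ℕ) : ℝ) - n / a) := by ring
    rw [this, abs_mul]
    have h3 : ((n/a : ℕ) : ℝ) ≤ (n:ℝ) / a := Nat.cast_div_le
    have h4 : (n:ℝ)/a < (n/a : ℕ) + 1 := by
      rw [← Nat.floor_div_eq_div (K := ℝ)]
      exact Nat.lt_floor_add_one _
    have : |((n/a : ℕ) : ℝ) - n / a| ≤ 1 := by rw [abs_le]; constructor <;> linarith
    nlinarith [abs_nonneg x]
  calc |(cnt X (n/a) : ℝ) - x / a * n| = |((cnt X (n/a) : ℝ) - x * (n/a : ℕ)) + (x * ((n/a : ℕ) : ℝ) - x / a * n)| := by ring_nf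
    _ ≤ _ := abs_add_le _ _
    _ ≤ _ := add_le_add h1 h2

lemma ND_le {X Y : Set ℕ} {x y : ℝ} (h : X ⊆ Y) (hX : ND X x) (hY : ND Y y) : x ≤ y := by
  obtain ⟨C, hC⟩ := hX
  obtain ⟨D, hD⟩ := hY
  by_contra hlt
  push Not at hlt
  obtain ⟨n, hn⟩ := exists_nat_gt ((C + D) / (x - y))
  rw [div_lt_iff₀ (by linarith)] at hn
  have h1 := abs_le.1 (hC n)
  have h2 := abs_le.1 (hD n)
  have h3 : (cnt X n : ℝ) ≤ cnt Y n := by exact_mod_cast cnt_mono h n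
  nlinarith

lemma ND_unique {X : Set ℕ} {x y : ℝ} (hX : ND X x) (hY : ND X y) : x = y :=
  le_antisymm (ND_le le_rfl hX hY) (ND_le le_rfl hY hX)

/-- density of a set, if it exists -/
def dn (X : Set ℕ) : ℝ := if h : ∃ x, ND X x then h.choose else 0

lemma dn_eq {X : Set ℕ} {x : ℝ} (h : ND X x) : dn X = x := by
  have h' : ∃ x, ND X x := ⟨x, h⟩
  rw [dn, dif_pos h']
  exact ND_unique h'.choose_spec h

/-- generic induction principle for sets of multiples of finite sets -/
lemma generic (H : Set ℕ → ℝ → Prop) (G : ℕ → Prop) (hG : ∀ a b, G a → b ∣ a → G b)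
    (hG0 : ¬ G 0)
    (h0 : H ∅ 0) (hc : ∀ X x, H X x → H Xᶜ (1 - x))
    (hu : ∀ X Y x y, Disjoint X Y → H X x → H Y y → H (X ∪ Y) (x + y))
    (hs : ∀ a X x, G a → H X x → H (scale a X) (x / a)) (S : Finset ℕ) (hS : ∀ a ∈ S, G a) :
    ∃ x, H (MN S) x := by
  suffices h : ∀ N : ℕ, ∀ S : Finset ℕ, S.card ≤ N → (∀ a ∈ S, G a) → ∃ x, H (MN S) x from
    h _ S le_rfl hS
  intro N
  induction N with
  | zero =>
    intro S hS _
    have : S = ∅ := Finset.card_eq_zero.1 (by omega)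
    subst this
    exact ⟨0, by simpa [MN_empty] using h0⟩
  | succ N ih =>
    intro S hcard hS
    rcases S.eq_empty_or_nonempty with rfl | ⟨a, ha⟩
    · exact ⟨0, by simpa [MN_empty] using h0⟩
    · set S' := S.erase a
      have hc' : S'.card ≤ N := by rw [Finset.card_erase_of_mem ha]; omega
      have hS' : ∀ b ∈ S', G b := fun b hb => hS b (Finset.mem_of_mem_erase hb)
      set S'' := S'.image (fun s => s / Nat.gcd s a)
      have ha0 : 0 < a := Nat.pos_of_ne_zero (by rintro rfl; exact hG0 (hS 0 ha))
      obtain ⟨x, hx⟩ := ih S' hc' hS'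
      obtain ⟨y, hy⟩ := ih S'' (Finset.card_image_le.trans hc') (by
        intro b hb
        obtain ⟨s, hs, rfl⟩ := Finset.mem_image.1 hb
        exact hG s _ (hS' s hs) (Nat.div_dvd_of_dvd (Nat.gcd_dvd_left _ _)))
      have key : ∀ m, (a * m ∈ MN (S' : Set ℕ)) ↔ m ∈ MN (S'' : Set ℕ) := by
        intro m
        have hdiv : ∀ s, s ∣ a * m ↔ s / Nat.gcd s a ∣ m := by
          intro s
          have hg : 0 < Nat.gcd s a := Nat.gcd_pos_of_pos_right _ ha0
          constructor
          · intro h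
            apply (Nat.coprime_div_gcd_div_gcd hg).dvd_of_dvd_mul_left
            obtain ⟨c, hc⟩ := h
            refine ⟨c, ?_⟩
            apply Nat.eq_of_mul_eq_mul_left hg
            rw [← mul_assoc, Nat.mul_div_cancel' (Nat.gcd_dvd_right s a), ← mul_assoc,
              Nat.mul_div_cancel' (Nat.gcd_dvd_left s a), hc]
          · rintro ⟨c, rfl⟩
            calc s = Nat.gcd s a * (s / Nat.gcd s a) := (Nat.mul_div_cancel' (Nat.gcd_dvd_left s a)).symm
              _ ∣ a * (s / Nat.gcd s a) := mul_dvd_mul_right (Nat.gcd_dvd_right s a) _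
              _ ∣ _ := ⟨c, by ring⟩
        simp only [MN, Set.mem_ofPred_eq, Finset.mem_coe, S'', Finset.mem_image]
        constructor
        · rintro ⟨b, hb, h⟩; exact ⟨_, ⟨b, hb, rfl⟩, (hdiv b).1 h⟩
        · rintro ⟨_, ⟨b, hb, rfl⟩, h⟩; exact ⟨b, hb, (hdiv b).2 h⟩
      have e : MN (S : Set ℕ) = MN (S' : Set ℕ) ∪ scale a (MN (S'' : Set ℕ))ᶜ := by
        ext n
        constructor
        · rintro ⟨b, hb, hn⟩
          by_cases hn' : n ∈ MN (S' : Set ℕ)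
          · exact Or.inl hn'
          · right
            have hba : b = a := by
              by_contra hne
              exact hn' ⟨b, Finset.mem_erase.2 ⟨hne, hb⟩, hn⟩
            subst hba
            obtain ⟨m, rfl⟩ := hn
            exact ⟨m, fun hm => hn' ((key m).2 hm), rfl⟩
        · rintro (⟨b, hb, hn⟩ | ⟨m, _, rfl⟩)
          · exact ⟨b, Finset.mem_of_mem_erase hb, hn⟩
          · exact ⟨a, ha, Dvd.intro _ rfl⟩
      rw [e]
      refine ⟨_, hu _ _ _ _ ?_ hx (hs a _ _ (hS a ha) (hc _ _ hy))⟩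
      rw [Set.disjoint_left]
      rintro n hn ⟨m, hm, rfl⟩
      exact hm ((key m).1 hn)

lemma ND_MN (S : Finset ℕ) (h0 : 0 ∉ S) : ND (MN S) (dn (MN S)) := by
  obtain ⟨x, hx⟩ := generic ND (fun a => a ≠ 0) (fun a b ha hb h => ha (by
    subst h; exact Nat.eq_zero_of_zero_dvd hb)) (by simp) ND_empty (fun X x => ND_compl) (fun X Y x y => ND_union)
    (fun a X x ha h => ND_scale (Nat.pos_of_ne_zero ha) h) S (fun a ha h => h0 (h ▸ ha))
  rwa [dn_eq hx]

/-- smooth-number version of the density -/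
lemma smooth_MN (y : ℕ) (S : Finset ℕ) (hS : ∀ a ∈ S, a ∈ y.smoothNumbers) :
    HasSum ((MN S ∩ y.smoothNumbers).indicator (fun n : ℕ => ((n:ℝ))⁻¹)) (dn (MN S) * mZ y) := by
  obtain ⟨x, hx, hx'⟩ := generic (fun X x => ND X x ∧
      HasSum ((X ∩ y.smoothNumbers).indicator (fun n : ℕ => ((n:ℝ))⁻¹)) (x * mZ y))
    (fun a => a ∈ y.smoothNumbers) (fun a b ha hb => Nat.mem_smoothNumbers_of_dvd ha hb)
    (fun h => Nat.ne_zero_of_mem_smoothNumbers h rfl)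
    ⟨ND_empty, by simp [hasSum_zero]⟩ (by
      rintro X x ⟨h1, h2⟩
      refine ⟨ND_compl h1, ?_⟩
      convert (mZ_hasSum y).sub h2 using 1
      · rfl
      · funext n
        by_cases hn : n ∈ y.smoothNumbers <;> by_cases hX : n ∈ X <;> simp [Set.indicator, hn, hX]
      · ring) (by
      rintro X Y x z hd ⟨h1, h2⟩ ⟨h3, h4⟩
      refine ⟨ND_union hd h1 h3, ?_⟩
      convert h2.add h4 using 1
      · funext n
        have : n ∈ X → n ∉ Y := fun h => Set.disjoint_left.1 hd h
        by_cases hn : n ∈ y.smoothNumbers <;> by_cases hX : n ∈ X <;> by_cases hY : n ∈ Y <;>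
          simp_all [Set.indicator]
      · ring) (by
      rintro a X x ha ⟨h1, h2⟩
      have ha0 : 0 < a := Nat.pos_of_ne_zero (Nat.ne_zero_of_mem_smoothNumbers ha)
      refine ⟨ND_scale ha0 h1, ?_⟩
      have hinj : Function.Injective (fun m : ℕ => a * m) := fun x y h => Nat.eq_of_mul_eq_mul_left ha0 h
      rw [← hinj.hasSum_iff]
      · convert h2.mul_left ((a:ℝ)⁻¹) using 1
        · rfl
        · funext n
          have e : (a * n ∈ scale a X ∩ y.smoothNumbers) ↔ n ∈ X ∩ y.smoothNumbers := by
            constructor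
            · rintro ⟨⟨m, hm, hm'⟩, h⟩
              obtain rfl := hinj hm'
              exact ⟨hm, Nat.mem_smoothNumbers_of_dvd h (Dvd.intro_left _ rfl)⟩
            · rintro ⟨h, h'⟩
              exact ⟨⟨n, h, rfl⟩, Nat.mul_mem_smoothNumbers ha h'⟩
          simp only [Function.comp, Set.indicator, e]
          split_ifs
          · push_cast; rw [mul_inv]
          · simp
        · ring
      · intro n hn
        rw [Set.indicator_of_notMem]
        rintro ⟨⟨m, _, rfl⟩, _⟩
        exact hn ⟨m, rfl⟩) S hS
  rwa [dn_eq hx]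

lemma ND_class (L : ℕ) (hL : 0 < L) (s : ℤ) : ND {n : ℕ | (n:ℤ) ≡ s [ZMOD L]} (1 / L) := by
  have hL' : (0:ℤ) < L := by exact_mod_cast hL
  have hLr : (0:ℝ) < L := by exact_mod_cast hL
  refine ⟨1, fun n => ?_⟩
  set v : ℕ := (s % L).toNat
  have hv : (v : ℤ) = s % L := Int.toNat_of_nonneg (Int.emod_nonneg _ hL'.ne')
  have e : cnt {n : ℕ | (n:ℤ) ≡ s [ZMOD L]} n = ((Finset.Ioc 0 n).filter (fun k => k ≡ v [MOD L])).card := by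
    unfold cnt
    congr 1
    ext k
    simp only [Finset.mem_filter, Finset.mem_Icc, Finset.mem_Ioc, Set.mem_ofPred_eq]
    rw [← Int.natCast_modEq_iff, hv]
    have : ((k:ℤ) ≡ s % L [ZMOD L]) ↔ ((k:ℤ) ≡ s [ZMOD L]) := by
      simp [Int.ModEq]
    rw [this]
    constructor <;> (rintro ⟨⟨a, b⟩, c⟩; exact ⟨⟨by omega, b⟩, c⟩)
  rw [e]
  have h := Nat.Ioc_filter_modEq_card 0 n hL v
  have h' : (((Finset.Ioc 0 n).filter (fun k => k ≡ v [MOD L])).card : ℝ) =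
    ((max (⌊((n:ℚ) - v) / L⌋ - ⌊(((0:ℕ):ℚ) - v) / L⌋) 0 : ℤ) : ℝ) := by rw [← h]; push_cast; rfl
  rw [h']
  have hmono : ⌊(((0:ℕ):ℚ) - v) / L⌋ ≤ ⌊((n:ℚ) - v) / L⌋ := by
    apply Int.floor_mono; gcongr; simp
  rw [max_eq_left (by linarith)]
  have f1 := Int.floor_le (((n:ℚ) - v) / L)
  have f2 := Int.lt_floor_add_one (((n:ℚ) - v) / L)
  have f3 := Int.floor_le ((((0:ℕ):ℚ) - v) / L)
  have f4 := Int.lt_floor_add_one ((((0:ℕ):ℚ) - v) / L)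
  have f5 : ((n:ℚ) - v) / L - (((0:ℕ):ℚ) - v) / L = n / L := by push_cast; ring
  have goal : |((⌊((n:ℚ) - v) / L⌋ - ⌊(((0:ℕ):ℚ) - v) / L⌋ : ℤ) : ℚ) - 1 / L * n| ≤ 1 := by
    push_cast at *
    rw [abs_le]
    have f6 : (1:ℚ) / L * n = n / L := by ring
    rw [f6]
    constructor <;> linarith
  have goal' := (Rat.cast_le (K := ℝ)).2 goal
  push_cast at goal' ⊢
  exact goal'

lemma scale_inter {a : ℕ} {X E E' : Set ℕ} (h : ∀ m, a * m ∈ E ↔ m ∈ E') :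
    scale a X ∩ E = scale a (X ∩ E') := by
  ext n
  constructor
  · rintro ⟨⟨m, hm, rfl⟩, hE⟩; exact ⟨m, ⟨hm, (h m).1 hE⟩, rfl⟩
  · rintro ⟨m, ⟨hm, hE⟩, rfl⟩; exact ⟨⟨m, hm, rfl⟩, (h m).2 hE⟩

lemma ND_compl_inter {X E : Set ℕ} {x e : ℝ} (hX : ND (X ∩ E) (x * e)) (hE : ND E e) :
    ND (Xᶜ ∩ E) ((1 - x) * e) := by
  have := ND_diff (X := X ∩ E) inter_subset_right hX hE
  convert this using 1
  · ext n; simp only [mem_inter_iff, mem_compl_iff, Set.mem_sdiff]; tauto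
  · ring

lemma ND_union_inter {X Y E : Set ℕ} {x y e : ℝ} (h : Disjoint X Y) (hX : ND (X ∩ E) (x * e))
    (hY : ND (Y ∩ E) (y * e)) : ND ((X ∪ Y) ∩ E) ((x + y) * e) := by
  rw [Set.union_inter_distrib_right, add_mul]
  exact ND_union (h.mono inter_subset_left inter_subset_left) hX hY

lemma ND_MN_class (L : ℕ) (hL : 0 < L) (S : Finset ℕ) (h0 : 0 ∉ S) (hS : ∀ a ∈ S, Nat.Coprime a L) (s : ℤ) :
    ND (MN S ∩ {n : ℕ | (n:ℤ) ≡ s [ZMOD L]}) (dn (MN S) * (1 / L)) := by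
  obtain ⟨x, hx, hx'⟩ := generic (fun X x => ND X x ∧
      ∀ s : ℤ, ND (X ∩ {n : ℕ | (n:ℤ) ≡ s [ZMOD L]}) (x * (1 / L)))
    (fun a => a ≠ 0 ∧ Nat.Coprime a L) (fun a b ha hb => ⟨by
      rintro rfl; exact ha.1 (Nat.eq_zero_of_zero_dvd hb), Nat.Coprime.coprime_dvd_left hb ha.2⟩)
    (fun h => h.1 rfl)
    ⟨ND_empty, by simpa using ND_empty⟩
    (fun X x h => ⟨ND_compl h.1, fun s => ND_compl_inter (h.2 s) (ND_class L hL s)⟩)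
    (fun X Y x y hd h h' => ⟨ND_union hd h.1 h'.1, fun s => ND_union_inter hd (h.2 s) (h'.2 s)⟩)
    (by
      rintro a X x ⟨ha0, ha⟩ ⟨h1, h2⟩
      refine ⟨ND_scale (Nat.pos_of_ne_zero ha0) h1, fun s => ?_⟩
      obtain ⟨a', ha'⟩ := Int.mod_coprime ha
      have e : ∀ m : ℕ, a * m ∈ {n : ℕ | (n:ℤ) ≡ s [ZMOD L]} ↔ m ∈ {n : ℕ | (n:ℤ) ≡ a' * s [ZMOD L]} := by
        intro m
        simp only [Set.mem_ofPred_eq]; push_cast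
        constructor
        · intro h
          have h3 := h.mul_left a'
          have h4 := ha'.mul_right (m:ℤ)
          refine Int.ModEq.trans ?_ h3
          rw [one_mul] at h4
          refine h4.symm.trans ?_
          rw [show (a:ℤ) * a' * m = a' * (a * m) by ring]
        · intro h
          have h3 := h.mul_left a
          refine h3.trans ?_
          rw [← mul_assoc]
          simpa using ha'.mul_right s
      rw [scale_inter e]
      have := ND_scale (Nat.pos_of_ne_zero ha0) (h2 (a' * s))
      convert this using 1; ring) S (fun a ha => ⟨fun h => h0 (h ▸ ha), hS a ha⟩)
  rw [dn_eq hx]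
  exact hx' s

lemma ND_indep (S T : Finset ℕ) (hS0 : 0 ∉ S) (hT0 : 0 ∉ T) (h : ∀ a ∈ S, ∀ b ∈ T, Nat.Coprime a b) :
    1 - dn (MN (S ∪ T : Finset ℕ)) = (1 - dn (MN S)) * (1 - dn (MN T)) := by
  set E := (MN (T : Set ℕ))ᶜ
  have hE : ND E (1 - dn (MN T)) := ND_compl (ND_MN T hT0)
  obtain ⟨x, hx, hx'⟩ := generic (fun X x => ND X x ∧ ND (X ∩ E) (x * (1 - dn (MN T))))
    (fun a => a ≠ 0 ∧ ∀ b ∈ T, Nat.Coprime a b) (fun a b ha hb => ⟨by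
      rintro rfl; exact ha.1 (Nat.eq_zero_of_zero_dvd hb),
        fun c hc => Nat.Coprime.coprime_dvd_left hb (ha.2 c hc)⟩)
    (fun h => h.1 rfl)
    ⟨ND_empty, by simpa using ND_empty⟩
    (fun X x h => ⟨ND_compl h.1, ND_compl_inter h.2 hE⟩)
    (fun X Y x y hd h h' => ⟨ND_union hd h.1 h'.1, ND_union_inter hd h.2 h'.2⟩)
    (by
      rintro a X x ⟨ha0, ha⟩ ⟨h1, h2⟩
      refine ⟨ND_scale (Nat.pos_of_ne_zero ha0) h1, ?_⟩
      have e : ∀ m : ℕ, a * m ∈ E ↔ m ∈ E := by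
        intro m
        simp only [E, Set.mem_compl_iff, MN, Set.mem_ofPred_eq, Finset.mem_coe, not_iff_not]
        constructor
        · rintro ⟨b, hb, hd⟩; exact ⟨b, hb, (ha b hb).symm.dvd_of_dvd_mul_left hd⟩
        · rintro ⟨b, hb, hd⟩; exact ⟨b, hb, hd.mul_left a⟩
      rw [scale_inter e]
      have := ND_scale (Nat.pos_of_ne_zero ha0) h2
      convert this using 1; ring) S (fun a ha => ⟨fun h => hS0 (h ▸ ha), h a ha⟩)
  have h1 := ND_compl_inter hx' hE
  have h2 : (MN (S : Set ℕ))ᶜ ∩ E = (MN ((S ∪ T : Finset ℕ) : Set ℕ))ᶜ := by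
    rw [← Set.compl_union]
    congr 1
    ext n
    simp only [MN, Set.mem_union, Set.mem_ofPred_eq, Finset.coe_union, Finset.mem_coe]
    constructor
    · rintro (⟨b, hb, h⟩ | ⟨b, hb, h⟩)
      · exact ⟨b, Or.inl hb, h⟩
      · exact ⟨b, Or.inr hb, h⟩
    · rintro ⟨b, hb | hb, h⟩
      · exact Or.inl ⟨b, hb, h⟩
      · exact Or.inr ⟨b, hb, h⟩
  rw [h2] at h1
  rw [dn_eq hx]
  exact ND_unique (ND_compl (ND_MN _ (by simp [hS0, hT0]))) h1

/-! ### Logarithmic sums -/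

def LS (X : Set ℕ) (n : ℕ) : ℝ := ∑ k ∈ Finset.Icc 1 n, X.indicator (fun m : ℕ => ((m:ℝ))⁻¹) k

lemma LS_succ (X : Set ℕ) (n : ℕ) : LS X (n+1) = LS X n + X.indicator (fun m : ℕ => ((m:ℝ))⁻¹) (n+1) := by
  unfold LS; rw [Finset.sum_Icc_succ_top (by omega)]

lemma cnt_succ (X : Set ℕ) (n : ℕ) : cnt X (n+1) = cnt X n + (if n+1 ∈ X then 1 else 0) := by
  unfold cnt; rw [Finset.card_filter, Finset.card_filter, Finset.sum_Icc_succ_top (by omega)]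

lemma LS_nonneg (X : Set ℕ) (n : ℕ) : 0 ≤ LS X n :=
  Finset.sum_nonneg fun k _ => Set.indicator_nonneg (fun m _ => by positivity) k

lemma LS_mono {X Y : Set ℕ} (h : X ⊆ Y) (n : ℕ) : LS X n ≤ LS Y n :=
  Finset.sum_le_sum fun k _ => Set.indicator_le_indicator_of_subset h (fun m => by positivity) k

lemma LS_union_le (X Y : Set ℕ) (n : ℕ) : LS (X ∪ Y) n ≤ LS X n + LS Y n := by
  unfold LS
  rw [← Finset.sum_add_distrib]
  apply Finset.sum_le_sum
  intro k _
  have : (0:ℝ) ≤ ((k:ℝ))⁻¹ := by positivity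
  by_cases hX : k ∈ X <;> by_cases hY : k ∈ Y <;> simp [Set.indicator, hX, hY]

lemma LS_biUnion_le {ι : Type*} (s : Finset ι) (X : ι → Set ℕ) (n : ℕ) :
    LS (⋃ i ∈ s, X i) n ≤ ∑ i ∈ s, LS (X i) n := by
  induction s using Finset.induction_on with
  | empty => simp [LS]
  | insert a s ha ih =>
    rw [Finset.set_biUnion_insert, Finset.sum_insert ha]
    exact (LS_union_le _ _ _).trans (by linarith)

lemma LS_univ (n : ℕ) : LS univ n = ((harmonic n : ℚ) : ℝ) := by
  rw [harmonic_eq_sum_Icc, LS]; simp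

lemma LS_univ_le (n : ℕ) : LS univ n ≤ 1 + Real.log n := by
  rw [LS_univ]; exact harmonic_le_one_add_log n

lemma le_LS_univ (n : ℕ) (hn : 1 ≤ n) : Real.log n ≤ LS univ n := by
  rw [LS_univ]
  refine le_trans ?_ (log_add_one_le_harmonic n)
  apply Real.log_le_log (by exact_mod_cast hn); push_cast; linarith

lemma LS_ND {X : Set ℕ} {x : ℝ} (h : ND X x) : ∃ C, ∀ n : ℕ, 1 ≤ n → |LS X n - x * Real.log n| ≤ C := by
  obtain ⟨C, hC⟩ := h
  have hC0 : 0 ≤ C := (abs_nonneg _).trans (hC 0)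
  have key : ∀ n : ℕ, |LS X n - x * LS univ n - ((cnt X n : ℝ) - x * n) / (n + 1)| ≤ C * (1 - 1 / (n + 1)) := by
    intro n
    induction n with
    | zero => simp [LS, cnt]
    | succ n ih =>
      have hn1 : (0:ℝ) < n + 1 := by positivity
      have hn2 : (0:ℝ) < n + 1 + 1 := by positivity
      have e1 : LS X (n+1) - x * LS univ (n+1) - ((cnt X (n+1) : ℝ) - x * (n+1:ℕ)) / ((n+1:ℕ) + 1)
        = (LS X n - x * LS univ n - ((cnt X n : ℝ) - x * n) / (n + 1)) +
          ((cnt X (n+1) : ℝ) - x * (n+1:ℕ)) * (1 / (n+1) - 1 / (n + 1 + 1)) := by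
        rw [LS_succ, LS_succ, cnt_succ]
        by_cases hX : n + 1 ∈ X
        · simp only [Set.indicator, hX, if_true, mem_univ]; push_cast; field_simp; ring
        · simp only [Set.indicator, hX, if_true, if_false, mem_univ]; push_cast; field_simp; ring
      rw [e1]
      refine (abs_add_le _ _).trans ?_
      rw [abs_mul]
      have h3 : (0:ℝ) ≤ 1 / (n+1) - 1 / (n + 1 + 1) := by
        have := one_div_le_one_div_of_le hn1 (by linarith : (n:ℝ)+1 ≤ n + 1 + 1)
        linarith
      rw [abs_of_nonneg h3]
      have h4 := mul_le_mul_of_nonneg_right (hC (n+1)) h3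
      calc _ ≤ C * (1 - 1 / ((n:ℝ) + 1)) + C * (1 / (n+1) - 1 / (n + 1 + 1)) := add_le_add ih h4
        _ = _ := by push_cast; ring
  refine ⟨C + C + |x|, fun n hn => ?_⟩
  have k1 := key n
  have hn1 : (1:ℝ) ≤ n + 1 := by linarith [(Nat.cast_nonneg n : (0:ℝ) ≤ n)]
  have k2 : C * (1 - 1 / ((n:ℝ) + 1)) ≤ C := by
    have : (0:ℝ) ≤ 1 / ((n:ℝ) + 1) := by positivity
    nlinarith
  have k3 : |((cnt X n : ℝ) - x * n) / (n + 1)| ≤ C := by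
    rw [abs_div, abs_of_pos (by linarith : (0:ℝ) < n + 1), div_le_iff₀ (by linarith)]
    nlinarith [hC n]
  have k4 : |x * (LS univ n - Real.log n)| ≤ |x| := by
    rw [abs_mul]
    have : |LS univ n - Real.log n| ≤ 1 := by
      have h1 := LS_univ_le n
      have h2 := le_LS_univ n hn
      rw [abs_le]; constructor <;> linarith
    nlinarith [abs_nonneg x]
  have e : LS X n - x * Real.log n = (LS X n - x * LS univ n - ((cnt X n : ℝ) - x * n) / (n + 1))
    + ((cnt X n : ℝ) - x * n) / (n + 1) + x * (LS univ n - Real.log n) := by ring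
  rw [e]
  refine (abs_add_three _ _ _).trans ?_
  linarith

lemma LS_shift (Y : Set ℕ) (i n : ℕ) : LS {k | k + i ∈ Y} n ≤ LS Y n + 2 * i := by
  have h1 : ∀ Y : Set ℕ, LS {k | k + 1 ∈ Y} n ≤ LS Y n + 2 := by
    intro Y
    have key : ∀ n : ℕ, LS {k | k + 1 ∈ Y} n ≤ LS Y (n+1) + (1 - 1 / (n+1)) := by
      intro n
      induction n with
      | zero => simpa [LS] using Set.indicator_nonneg (fun m _ => by positivity) 1
      | succ n ih =>
        rw [LS_succ, LS_succ Y (n+1)]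
        have hn1 : (0:ℝ) < n + 1 := by positivity
        have h3 : (0:ℝ) ≤ 1 / (n+1) - 1 / (n + 1 + 1) := by
          have := one_div_le_one_div_of_le hn1 (by linarith : (n:ℝ)+1 ≤ n + 1 + 1)
          linarith
        have : Set.indicator {k | k + 1 ∈ Y} (fun m : ℕ => ((m:ℝ))⁻¹) (n+1) ≤
            Y.indicator (fun m : ℕ => ((m:ℝ))⁻¹) (n+1+1) + (1 / (n+1) - 1 / (n + 1 + 1)) := by
          by_cases hX : n + 1 + 1 ∈ Y
          · rw [Set.indicator_of_mem (show n+1 ∈ {k | k + 1 ∈ Y} from hX), Set.indicator_of_mem hX]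
            push_cast
            rw [one_div, one_div]; linarith
          · rw [Set.indicator_of_notMem (show n+1 ∉ {k | k + 1 ∈ Y} from hX), Set.indicator_of_notMem hX]
            linarith
        push_cast
        linarith
    have h2 := key n
    rw [LS_succ] at h2
    have h3 : Y.indicator (fun m : ℕ => ((m:ℝ))⁻¹) (n+1) ≤ 1 := by
      apply Set.indicator_le' (fun m _ => Nat.cast_inv_le_one m) (fun _ _ => zero_le_one)
    have h4 : (0:ℝ) ≤ 1 / ((n:ℝ)+1) := by positivity
    linarith
  induction i with
  | zero => simp
  | succ i ih =>
    have h2 := h1 {k | k + i ∈ Y}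
    have e : {k | k + 1 ∈ {k | k + i ∈ Y}} = {k | k + (i+1) ∈ Y} := by
      ext k; change k + 1 + i ∈ Y ↔ k + (i+1) ∈ Y
      rw [show k + 1 + i = k + (i+1) by ring]
    rw [e] at h2
    push_cast
    linarith

/-! ### The density of the set of multiples as a supremum -/

def DD (A : Set ℕ) : ℝ := sSup {x | ∃ S : Finset ℕ, (S : Set ℕ) ⊆ A ∧ x = dn (MN S)}

lemma dn_le_one (S : Finset ℕ) (h0 : 0 ∉ S) : dn (MN S) ≤ 1 := ND_le (subset_univ _) (ND_MN S h0) ND_univ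

lemma dn_nonneg (S : Finset ℕ) (h0 : 0 ∉ S) : 0 ≤ dn (MN S) := ND_le (empty_subset _) ND_empty (ND_MN S h0)

lemma DD_bdd {A : Set ℕ} (h0 : 0 ∉ A) :
    BddAbove {x | ∃ S : Finset ℕ, (S : Set ℕ) ⊆ A ∧ x = dn (MN S)} := by
  refine ⟨1, ?_⟩
  rintro x ⟨S, hS, rfl⟩
  exact dn_le_one S (fun h => h0 (hS h))

lemma le_DD {A : Set ℕ} (h0 : 0 ∉ A) {S : Finset ℕ} (hS : (S : Set ℕ) ⊆ A) : dn (MN S) ≤ DD A :=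
  le_csSup (DD_bdd h0) ⟨S, hS, rfl⟩

lemma exists_lt_DD {A : Set ℕ} {c : ℝ} (h : c < DD A) :
    ∃ S : Finset ℕ, (S : Set ℕ) ⊆ A ∧ c < dn (MN S) := by
  obtain ⟨x, ⟨S, hS, rfl⟩, hx⟩ := exists_lt_of_lt_csSup (s := {x | ∃ S : Finset ℕ, (S : Set ℕ) ⊆ A ∧ x = dn (MN S)})
    ⟨_, ∅, by simp, rfl⟩ h
  exact ⟨S, hS, hx⟩

lemma DD_le_one {A : Set ℕ} (h0 : 0 ∉ A) : DD A ≤ 1 := by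
  refine csSup_le ⟨_, ∅, by simp, rfl⟩ ?_
  rintro x ⟨S, hS, rfl⟩
  exact dn_le_one S (fun h => h0 (hS h))

lemma DD_mono {A B : Set ℕ} (h0 : 0 ∉ B) (h : A ⊆ B) : DD A ≤ DD B := by
  refine csSup_le ⟨_, ∅, by simp, rfl⟩ ?_
  rintro x ⟨S, hS, rfl⟩
  exact le_DD h0 (hS.trans h)

/-- removing one element `≠ 1` does not destroy the Behrend property -/
lemma DD_erase {A : Set ℕ} (h0 : 0 ∉ A) (h : DD A = 1) (a : ℕ) (ha : 2 ≤ a) {ε : ℝ} (hε : 0 < ε) :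
    ∃ S : Finset ℕ, (S : Set ℕ) ⊆ A \ {a} ∧ 1 - dn (MN S) < ε := by
  obtain ⟨S, hS, hlt⟩ := exists_lt_DD (A := A) (c := 1 - ε / 2) (by rw [h]; linarith)
  have hS0 : 0 ∉ S := fun h => h0 (hS h)
  refine ⟨S.erase a, ?_, ?_⟩
  · intro s hs
    rw [Finset.mem_coe, Finset.mem_erase] at hs
    exact ⟨hS hs.2, hs.1⟩
  · set T := S.erase a
    have hT0 : 0 ∉ T := fun h => hS0 (Finset.mem_of_mem_erase h)
    have ha0 : 0 < a := by omega
    have h1 := ND_compl (ND_MN S hS0)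
    have h2 := ND_compl (ND_MN T hT0)
    have h3 := ND_scale ha0 h2
    have h4 := ND_scale ha0 h1
    set u := 1 - dn (MN (T : Set ℕ))
    set v := 1 - dn (MN (S : Set ℕ))
    -- cover of the complement
    have hsub : (MN (T : Set ℕ))ᶜ \ (MN (S : Set ℕ))ᶜ ⊆ scale a (MN (T : Set ℕ))ᶜ := by
      rintro n ⟨hn, hn'⟩
      rw [Set.mem_compl_iff, not_not] at hn'
      obtain ⟨b, hb, hbn⟩ := hn'
      have hba : b = a := by
        by_contra hne
        exact hn ⟨b, Finset.mem_erase.2 ⟨hne, hb⟩, hbn⟩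
      subst hba
      obtain ⟨m, rfl⟩ := hbn
      refine ⟨m, ?_, rfl⟩
      rintro ⟨c, hc, hcm⟩
      exact hn ⟨c, hc, hcm.mul_left _⟩
    have h5 := ND_diff (Set.compl_subset_compl.2 (MN_mono (Finset.coe_subset.2 (Finset.erase_subset a S)))) h1 h2
    have h6 : u - v ≤ u / a := ND_le hsub h5 h3
    have h7 : u / a ≤ u / 2 := by
      have hu : 0 ≤ u := by have := dn_le_one T hT0; simp only [u]; linarith
      have : (2:ℝ) ≤ a := by exact_mod_cast ha
      gcongr
    have : v < ε / 2 := by simp only [v]; linarith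
    linarith

/-- Elements all of whose prime factors exceed `N`. -/
def rough (C : Set ℕ) (N : ℕ) : Set ℕ := {c ∈ C | ∀ p : ℕ, p.Prime → p ∣ c → N < p}

lemma rough_sub (C : Set ℕ) (N : ℕ) : rough C N ⊆ C := fun _ h => h.1

lemma rough_anti (C : Set ℕ) {N M : ℕ} (h : N ≤ M) : rough C M ⊆ rough C N :=
  fun _ hc => ⟨hc.1, fun p hp hpc => lt_of_le_of_lt h (hc.2 p hp hpc)⟩

lemma DD_rough {C : Set ℕ} (h0 : 0 ∉ C) (h : DD C < 1) {ε : ℝ} (hε : 0 < ε) :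
    ∃ N, ∀ M, N ≤ M → DD (rough C M) < ε := by
  suffices hh : ∃ N, DD (rough C N) < ε by
    obtain ⟨N, hN⟩ := hh
    exact ⟨N, fun M hM => lt_of_le_of_lt (DD_mono (fun h => h0 h.1) (rough_anti C hM)) hN⟩
  by_contra hcon
  push Not at hcon
  have hε1 : ε ≤ 1 := (hcon 0).trans (DD_le_one (fun h => h0 h.1))
  have key : ∀ j : ℕ, ∃ S : Finset ℕ, (S : Set ℕ) ⊆ C ∧ 1 - dn (MN S) ≤ (1 - ε / 2) ^ j := by
    intro j
    induction j with
    | zero => exact ⟨∅, by simp, by simpa using dn_nonneg ∅ (by simp)⟩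
    | succ j ih =>
      obtain ⟨S, hS, hle⟩ := ih
      obtain ⟨T, hT, hlt⟩ := exists_lt_DD (A := rough C (S.sup id)) (c := ε / 2)
        (by linarith [hcon (S.sup id)])
      have hS0 : 0 ∉ S := fun h => h0 (hS h)
      have hT0 : 0 ∉ T := fun h => h0 (hT h).1
      refine ⟨S ∪ T, ?_, ?_⟩
      · rw [Finset.coe_union]; exact union_subset hS (hT.trans (rough_sub _ _))
      · rw [ND_indep S T hS0 hT0, pow_succ]
        · have := dn_le_one S hS0
          have := dn_le_one T hT0
          apply mul_le_mul hle (by linarith) (by linarith)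
          exact pow_nonneg (by linarith) _
        · intro a ha b hb
          apply Nat.coprime_of_dvd
          intro p hp hpa hpb
          have h1 := (hT hb).2 p hp hpb
          have h2 : a ≤ S.sup id := Finset.le_sup (f := id) ha
          have h3 := Nat.le_of_dvd (Nat.pos_of_ne_zero (fun h => hS0 (h ▸ ha))) hpa
          omega
  obtain ⟨j, hj⟩ := exists_pow_lt_of_lt_one (show 0 < 1 - DD C by linarith) (show 1 - ε/2 < 1 by linarith)
  obtain ⟨S, hS, hle⟩ := key j
  have := le_DD h0 hS
  linarith

/-- The essential part of the Davenport-Erdős theorem. -/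
lemma DE : ∃ C0 : ℝ, 0 < C0 ∧ ∀ (A : Set ℕ), 0 ∉ A → ∀ S : Finset ℕ, (S : Set ℕ) ⊆ A →
    ∀ᶠ n : ℕ in atTop, LS (MN A \ MN S) n ≤ C0 * (DD A - dn (MN S)) * Real.log n := by
  obtain ⟨C0, hC0, hZ⟩ := mZ_le
  refine ⟨C0, hC0, fun A hA S hS => ?_⟩
  filter_upwards [eventually_ge_atTop (max 2 (S.sup id))] with n hn
  have hn2 : 2 ≤ n := le_trans (le_max_left _ _) hn
  have hnS : S.sup id ≤ n := le_trans (le_max_right _ _) hn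
  set S' : Finset ℕ := (Finset.Icc 1 n).filter (· ∈ A)
  have hS'A : (S' : Set ℕ) ⊆ A := fun s hs => (Finset.mem_filter.1 hs).2
  have hpos : ∀ a ∈ A, 0 < a := fun a ha => Nat.pos_of_ne_zero (fun h => hA (h ▸ ha))
  have hSS' : S ⊆ S' := by
    intro s hs
    have h2 : s ≤ S.sup id := Finset.le_sup (f := id) hs
    exact Finset.mem_filter.2 ⟨Finset.mem_Icc.2 ⟨hpos s (hS hs), by omega⟩, hS hs⟩
  have hsm' : ∀ a ∈ S', a ∈ (n+1).smoothNumbers := by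
    intro a ha
    have := Finset.mem_Icc.1 (Finset.mem_filter.1 ha).1
    exact Nat.mem_smoothNumbers_of_lt this.1 (by omega)
  have h1 := smooth_MN (n+1) S' hsm'
  have h2 := smooth_MN (n+1) S (fun a ha => hsm' a (hSS' ha))
  have h3 := h1.sub h2
  have hmono : MN (S : Set ℕ) ⊆ MN (S' : Set ℕ) := MN_mono (Finset.coe_subset.2 hSS')
  have h4 : LS (MN A \ MN S) n ≤ dn (MN S') * mZ (n+1) - dn (MN S) * mZ (n+1) := by
    refine le_trans ?_ (sum_le_hasSum (Finset.Icc 1 n) ?_ h3)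
    · apply Finset.sum_le_sum
      intro k hk
      rw [Finset.mem_Icc] at hk
      have hksm : k ∈ (n+1).smoothNumbers := Nat.mem_smoothNumbers_of_lt hk.1 (by omega)
      by_cases hkX : k ∈ MN A \ MN (S : Set ℕ)
      · obtain ⟨⟨b, hb, hbk⟩, hk'⟩ := hkX
        have hk1 : k ∈ MN (S' : Set ℕ) := by
          refine ⟨b, Finset.mem_filter.2 ⟨Finset.mem_Icc.2 ⟨hpos b hb, ?_⟩, hb⟩, hbk⟩
          exact (Nat.le_of_dvd hk.1 hbk).trans hk.2
        rw [Set.indicator_of_mem (show k ∈ MN A \ MN (S : Set ℕ) from ⟨⟨b, hb, hbk⟩, hk'⟩), Set.indicator_of_mem (show k ∈ MN (S' : Set ℕ) ∩ _ from ⟨hk1, hksm⟩),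
          Set.indicator_of_notMem (fun h => hk' h.1)]
        simp
      · rw [Set.indicator_of_notMem hkX]
        rw [sub_nonneg]
        exact Set.indicator_le_indicator_of_subset (inter_subset_inter_left _ hmono) (fun m => by positivity) k
    · intro k _
      rw [sub_nonneg]
      exact Set.indicator_le_indicator_of_subset (inter_subset_inter_left _ hmono) (fun m => by positivity) k
  have h5 := le_DD hA hS'A
  have h6 : dn (MN S) ≤ dn (MN S') := ND_le hmono (ND_MN S (fun h => hA (hS h))) (ND_MN S' (fun h => hA (hS'A h)))
  have h7 := hZ n hn2
  have h8 : (0:ℝ) ≤ Real.log n := Real.log_natCast_nonneg n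
  calc LS (MN A \ MN S) n ≤ (dn (MN S') - dn (MN S)) * mZ (n+1) := by linarith
    _ ≤ (dn (MN S') - dn (MN S)) * (C0 * Real.log n) := by
        apply mul_le_mul_of_nonneg_left h7; linarith
    _ ≤ (DD A - dn (MN S)) * (C0 * Real.log n) := by
        apply mul_le_mul_of_nonneg_right (by linarith); positivity
    _ = _ := by ring

lemma AP_bound (L : ℕ) (hL : 0 < L) (A : Set ℕ) (h0 : 0 ∉ A) (hA : ∀ a ∈ A, Nat.Coprime a L)
    {ε : ℝ} (hε : 0 < ε) (h : DD A < ε) (s : ℤ) :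
    ∃ C, ∀ᶠ n : ℕ in atTop, LS (MN A ∩ {n : ℕ | (n:ℤ) ≡ s [ZMOD L]}) n ≤ 2 * ε / L * Real.log n + C := by
  obtain ⟨C0, hC0, hDE⟩ := DE
  have hLr : (0:ℝ) < L := by exact_mod_cast hL
  obtain ⟨S, hS, hlt⟩ := exists_lt_DD (A := A) (c := DD A - ε / L / C0) (by
    have : 0 < ε / L / C0 := by positivity
    linarith)
  have hS0 : 0 ∉ S := fun h => h0 (hS h)
  obtain ⟨C, hC⟩ := LS_ND (ND_MN_class L hL S hS0 (fun a ha => hA a (hS ha)) s)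
  refine ⟨C, ?_⟩
  filter_upwards [hDE A h0 S hS, eventually_ge_atTop 1] with n hn hn1
  have h8 : (0:ℝ) ≤ Real.log n := Real.log_natCast_nonneg n
  have h1 := (abs_le.1 (hC n hn1)).2
  have h2 : LS (MN A ∩ {n : ℕ | (n:ℤ) ≡ s [ZMOD L]}) n ≤
      LS (MN S ∩ {n : ℕ | (n:ℤ) ≡ s [ZMOD L]}) n + LS (MN A \ MN S) n := by
    refine (LS_mono ?_ n).trans (LS_union_le _ _ n)
    rintro k ⟨hk, hk'⟩
    by_cases hkS : k ∈ MN (S : Set ℕ)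
    · exact Or.inl ⟨hkS, hk'⟩
    · exact Or.inr ⟨hk, hkS⟩
  have h3 : C0 * (DD A - dn (MN S)) * Real.log n ≤ ε / L * Real.log n := by
    apply mul_le_mul_of_nonneg_right _ h8
    have : DD A - dn (MN S) ≤ ε / L / C0 := by linarith
    calc C0 * (DD A - dn (MN S)) ≤ C0 * (ε / L / C0) := by gcongr
      _ = _ := by field_simp
  have h4 : dn (MN S) * (1 / L) * Real.log n ≤ ε / L * Real.log n := by
    apply mul_le_mul_of_nonneg_right _ h8
    have := le_DD h0 hS
    rw [mul_one_div]; gcongr; linarith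
  have e : 2 * ε / L * Real.log n = ε / L * Real.log n + ε / L * Real.log n := by ring
  rw [e]
  linarith

/-! ### Transfer to `logWeight` -/

lemma logWeight_eq_s16 (A : Set ℤ) (n : ℕ) :
    logWeight A n = (Real.log n)⁻¹ * LS {k : ℕ | (k:ℤ) ∈ A} n := by
  unfold logWeight LS
  congr 1

lemma logWeight_nonneg_s16 (A : Set ℤ) (n : ℕ) : 0 ≤ logWeight A n := by
  rw [logWeight_eq_s16]
  exact mul_nonneg (inv_nonneg.2 (Real.log_natCast_nonneg n)) (LS_nonneg _ _)

lemma logWeight_le_s16 (A : Set ℤ) (n : ℕ) (hn : 2 ≤ n) : logWeight A n ≤ (Real.log 2)⁻¹ + 1 := by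
  rw [logWeight_eq_s16]
  have l2 : 0 < Real.log 2 := Real.log_pos (by norm_num)
  have hn' : (2:ℝ) ≤ n := by exact_mod_cast hn
  have l0 : Real.log 2 ≤ Real.log n := Real.log_le_log (by norm_num) hn'
  have ln : 0 < Real.log n := by linarith
  have h1 : LS {k : ℕ | (k:ℤ) ∈ A} n ≤ 1 + Real.log n := (LS_mono (subset_univ _) n).trans (LS_univ_le n)
  calc (Real.log n)⁻¹ * LS {k : ℕ | (k:ℤ) ∈ A} n ≤ (Real.log n)⁻¹ * (1 + Real.log n) := by gcongr
    _ = (Real.log n)⁻¹ + 1 := by field_simp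
    _ ≤ _ := by gcongr

lemma lw_bdd_below (A : Set ℤ) : IsBoundedUnder (· ≥ ·) atTop (logWeight A) :=
  isBoundedUnder_of ⟨0, fun n => logWeight_nonneg_s16 A n⟩

lemma lw_cobdd (A : Set ℤ) : IsCoboundedUnder (· ≥ ·) atTop (logWeight A) := by
  apply IsBoundedUnder.isCoboundedUnder_ge
  refine ⟨(Real.log 2)⁻¹ + 1, ?_⟩
  rw [eventually_map]
  filter_upwards [eventually_ge_atTop 2] with n hn using logWeight_le_s16 A n hn

lemma log_tendsto : Tendsto (fun n : ℕ => Real.log n) atTop atTop :=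
  Real.tendsto_log_atTop.comp tendsto_natCast_atTop_atTop

lemma low_pos (A : Set ℤ) (c C : ℝ) (hc : 0 < c)
    (h : ∀ᶠ n : ℕ in atTop, c * Real.log n - C ≤ LS {k : ℕ | (k:ℤ) ∈ A} n) : 0 < logDensLow A := by
  refine lt_of_lt_of_le (half_pos hc) ?_
  apply le_liminf_of_le (lw_cobdd A)
  filter_upwards [h, log_tendsto.eventually_ge_atTop (max 1 (2 * C / c))] with n hn hl
  have l1 : 1 ≤ Real.log n := (le_max_left _ _).trans hl
  have l2 : 2 * C / c ≤ Real.log n := (le_max_right _ _).trans hl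
  rw [div_le_iff₀ hc] at l2
  rw [logWeight_eq_s16, inv_mul_eq_div, le_div_iff₀ (by linarith)]
  nlinarith

lemma low_le (A A' : Set ℤ) (h : ∀ ε : ℝ, 0 < ε → ∀ᶠ n : ℕ in atTop, logWeight A n ≤ logWeight A' n + ε) :
    logDensLow A ≤ logDensLow A' := by
  by_contra hlt
  push Not at hlt
  set u := logDensLow A
  set v := logDensLow A'
  have h1 : ∀ᶠ n : ℕ in atTop, v + 2 * ((u - v) / 3) < logWeight A n :=
    eventually_lt_of_lt_liminf (by change _ < u; linarith) (lw_bdd_below A)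
  have h2 : v + (u - v) / 3 ≤ v := by
    apply le_liminf_of_le (lw_cobdd A')
    filter_upwards [h1, h ((u - v) / 3) (by linarith)] with n a b
    linarith
  linarith

lemma mem_multiplesZ_nat (B : Set ℕ) (k : ℕ) : (k:ℤ) ∈ multiplesZ B ↔ k ∈ MN B := by
  constructor
  · rintro ⟨b, hb, h⟩; exact ⟨b, hb, by exact_mod_cast h⟩
  · rintro ⟨b, hb, h⟩; exact ⟨b, hb, by exact_mod_cast h⟩

lemma taut_DD (B : Set ℕ) (hB0 : 0 ∉ B) (htaut : IsTaut B) (d : ℕ) (hd : d ∉ B) (hd0 : 0 < d) :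
    DD {a | d * a ∈ B} < 1 := by
  set A : Set ℕ := {a | d * a ∈ B}
  have hA0 : 0 ∉ A := fun h => hB0 (by have h' : d * 0 ∈ B := h; simpa using h')
  by_contra hcon
  have h1 : DD A = 1 := le_antisymm (DD_le_one hA0) (not_lt.1 hcon)
  -- an element of A
  obtain ⟨S0, hS0, hlt⟩ := exists_lt_DD (A := A) (c := 1/2) (by rw [h1]; norm_num)
  obtain ⟨a, ha⟩ : ∃ a, a ∈ A := by
    by_contra hne
    have : S0 = ∅ := by
      rw [Finset.eq_empty_iff_forall_notMem]
      exact fun s hs => hne ⟨s, hS0 hs⟩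
    subst this
    rw [Finset.coe_empty, MN_empty, dn_eq ND_empty] at hlt
    norm_num at hlt
  have ha2 : 2 ≤ a := by
    have : a ≠ 0 := fun h => hA0 (h ▸ ha)
    have : a ≠ 1 := by
      rintro rfl
      have h' : d * 1 ∈ B := ha
      exact hd (by simpa using h')
    omega
  refine not_le.2 (htaut (d * a) ha) (low_le _ _ ?_)
  intro ε hε
  obtain ⟨S, hS, hlt⟩ := DD_erase hA0 h1 a ha2 (half_pos hε)
  have hS0 : 0 ∉ S := fun h => hA0 (hS h).1
  have hND := ND_scale hd0 (ND_compl (ND_MN S hS0))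
  obtain ⟨C, hC⟩ := LS_ND hND
  have hcover : {k : ℕ | (k:ℤ) ∈ multiplesZ B} ⊆ {k : ℕ | (k:ℤ) ∈ multiplesZ (B \ {d * a})} ∪ scale d (MN (S : Set ℕ))ᶜ := by
    intro k hk
    have hk : (k:ℤ) ∈ multiplesZ B := hk
    by_cases hk' : (k:ℤ) ∈ multiplesZ (B \ {d * a})
    · exact Or.inl hk'
    · right
      rw [mem_multiplesZ_nat] at hk hk'
      obtain ⟨b, hb, hbk⟩ := hk
      have hba : b = d * a := by
        by_contra hne
        exact hk' ⟨b, ⟨hb, hne⟩, hbk⟩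
      subst hba
      obtain ⟨m, rfl⟩ := hbk
      refine ⟨a * m, ?_, by ring⟩
      rintro ⟨s, hs, hsm⟩
      refine hk' ⟨d * s, ⟨(hS hs).1, fun h => (hS hs).2 ?_⟩, ?_⟩
      · exact Nat.eq_of_mul_eq_mul_left hd0 h
      · rw [mul_assoc]; exact mul_dvd_mul_left d hsm
  filter_upwards [log_tendsto.eventually_ge_atTop (max 1 (2 * C / ε)), eventually_ge_atTop 1] with n hl hn1
  have l1 : 1 ≤ Real.log n := (le_max_left _ _).trans hl
  have l2 : 2 * C / ε ≤ Real.log n := (le_max_right _ _).trans hl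
  rw [div_le_iff₀ hε] at l2
  have l0 : 0 < Real.log n := by linarith
  have h3 := (LS_mono hcover n).trans (LS_union_le _ _ n)
  have h4 := (abs_le.1 (hC n hn1)).2
  have h5 : (1 - dn (MN S)) / d ≤ ε / 2 := by
    have : 0 ≤ 1 - dn (MN S) := by have := dn_le_one S hS0; linarith
    refine (div_le_self this (by exact_mod_cast hd0)).trans hlt.le
  have h6 : (1 - dn (MN S)) / d * Real.log n ≤ ε / 2 * Real.log n := by gcongr
  rw [logWeight_eq_s16, logWeight_eq_s16, inv_mul_eq_div, inv_mul_eq_div, div_le_iff₀ l0, add_mul,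
    div_mul_cancel₀ _ l0.ne']
  linarith

lemma block_of_eta_aux (B : Set ℕ) (hB0 : 0 ∉ B)
    (htaut : IsTaut B) (hne : B.Nonempty) (r : ℤ) (n : ℕ) (hn : 0 < n) :
    0 < logDensLow {k : ℤ | 0 ≤ k ∧
        ∀ i ∈ Finset.Icc 1 n, ((k + (i : ℤ)) ∈ freeZ B ↔ (r + (i : ℤ)) ∈ freeZ B)} := by
  set I : Finset ℕ := (Finset.Icc 1 n).filter (fun i => r + (i:ℤ) ∈ freeZ B)
  set J : Finset ℕ := (Finset.Icc 1 n).filter (fun i => r + (i:ℤ) ∉ freeZ B)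
  have hI0 : ∀ i ∈ I, r + (i:ℤ) ≠ 0 := by
    intro i hi h
    have h1 := (Finset.mem_filter.1 hi).2
    obtain ⟨b, hb⟩ := hne
    exact h1 ⟨b, hb, by rw [h]; exact dvd_zero _⟩
  have hJ : ∀ i ∈ J, ∃ b ∈ B, (b:ℤ) ∣ r + i := by
    intro i hi
    have h1 := (Finset.mem_filter.1 hi).2
    exact not_not.1 h1
  choose! bb hbB hbd using hJ
  set Δ : Finset ℕ := I.biUnion (fun i => (r + (i:ℤ)).natAbs.divisors)
  have hΔ : ∀ d ∈ Δ, d ∉ B ∧ 0 < d := by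
    intro d hd
    obtain ⟨i, hi, hd'⟩ := Finset.mem_biUnion.1 hd
    refine ⟨fun hdB => (Finset.mem_filter.1 hi).2 ⟨d, hdB, ?_⟩, Nat.pos_of_mem_divisors hd'⟩
    exact Int.natCast_dvd.2 (Nat.dvd_of_mem_divisors hd')
  set Cd : ℕ → Set ℕ := fun d => {a | d * a ∈ B}
  have hCd0 : ∀ d, 0 ∉ Cd d := fun d h => hB0 (by have h' : d * 0 ∈ B := h; simpa using h')
  set q : ℝ := (I.card : ℝ) * Δ.card
  have hq : 0 ≤ q := by positivity
  set ε : ℝ := 1 / (4 * (q + 1))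
  have hε : 0 < ε := by positivity
  have hN : ∀ d ∈ Δ, ∃ N, ∀ M, N ≤ M → DD (rough (Cd d) M) < ε := fun d hd =>
    DD_rough (hCd0 d) (taut_DD B hB0 htaut d (hΔ d hd).1 (hΔ d hd).2) hε
  choose! Nf hNf using hN
  set N := Δ.sup Nf
  have hN' : ∀ d ∈ Δ, DD (rough (Cd d) N) < ε := fun d hd => hNf d hd N (Finset.le_sup hd)
  set P : ℕ := ∏ i ∈ I, (r + (i:ℤ)).natAbs
  have hP : 0 < P := Finset.prod_pos fun i hi => Int.natAbs_pos.2 (hI0 i hi)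
  set Q : ℕ := ∏ i ∈ J, bb i
  have hQ : 0 < Q := Finset.prod_pos fun i hi => Nat.pos_of_ne_zero (fun h => hB0 (h ▸ hbB i hi))
  set W : ℕ := N.factorial * Q * P
  set L : ℕ := W * P
  have hW : 0 < W := Nat.mul_pos (Nat.mul_pos N.factorial_pos hQ) hP
  have hL : 0 < L := Nat.mul_pos hW hP
  have hLr : (0:ℝ) < L := by exact_mod_cast hL
  have hQL : Q ∣ L := ((dvd_mul_left Q N.factorial).mul_right P).mul_right P
  have hNL : N.factorial ∣ L := ((dvd_mul_right N.factorial Q).mul_right P).mul_right P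
  -- arithmetic sets
  set A : ℕ → Set ℕ := fun d => {a ∈ rough (Cd d) N | Nat.Coprime a L}
  have hA0 : ∀ d, 0 ∉ A d := fun d h => hCd0 d h.1.1
  have hAD : ∀ d ∈ Δ, DD (A d) < ε := fun d hd =>
    lt_of_le_of_lt (DD_mono (fun h => hCd0 d h.1) (fun a ha => ha.1)) (hN' d hd)
  have hbound : ∀ x ∈ I ×ˢ Δ, ∃ C, ∀ᶠ m : ℕ in atTop,
      LS {k | k + x.1 ∈ MN (A x.2) ∩ {n : ℕ | (n:ℤ) ≡ r + x.1 [ZMOD L]}} m ≤ 2 * ε / L * Real.log m + C := by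
    intro x hx
    obtain ⟨C, hC⟩ := AP_bound L hL (A x.2) (hA0 _) (fun a ha => ha.2) hε (hAD _ (Finset.mem_product.1 hx).2) (r + x.1)
    refine ⟨C + 2 * x.1, ?_⟩
    filter_upwards [hC] with m hm
    have := LS_shift (MN (A x.2) ∩ {n : ℕ | (n:ℤ) ≡ r + x.1 [ZMOD L]}) x.1 m
    linarith
  choose! Cf hCf using hbound
  obtain ⟨C1, hC1⟩ := LS_ND (ND_class L hL r)
  set bad : Set ℕ := ⋃ x ∈ I ×ˢ Δ, {k | k + x.1 ∈ MN (A x.2) ∩ {n : ℕ | (n:ℤ) ≡ r + x.1 [ZMOD L]}}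
  set G : Set ℤ := {k : ℤ | 0 ≤ k ∧
        ∀ i ∈ Finset.Icc 1 n, ((k + (i : ℤ)) ∈ freeZ B ↔ (r + (i : ℤ)) ∈ freeZ B)}
  have hcover : {k : ℕ | (k:ℤ) ≡ r [ZMOD L]} ⊆ {k : ℕ | (k:ℤ) ∈ G} ∪ bad := by
    intro k hk
    have hk : (k:ℤ) ≡ r [ZMOD L] := hk
    by_cases hb : k ∈ bad
    · exact Or.inr hb
    · left
      refine ⟨by positivity, fun i hi => ?_⟩
      have hki : (k:ℤ) + i ≡ r + i [ZMOD L] := hk.add_right _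
      by_cases hri : r + (i:ℤ) ∈ freeZ B
      · refine ⟨fun _ => hri, fun _ => ?_⟩
        rintro ⟨b, hbB', hbk⟩
        have hiI : i ∈ I := Finset.mem_filter.2 ⟨hi, hri⟩
        have hbpos : 0 < b := Nat.pos_of_ne_zero (fun h => hB0 (h ▸ hbB'))
        set d := Nat.gcd b L
        have hd0 : 0 < d := Nat.gcd_pos_of_pos_left _ hbpos
        have hdb : d ∣ b := Nat.gcd_dvd_left b L
        have hdL : d ∣ L := Nat.gcd_dvd_right b L
        have hdr : (d:ℤ) ∣ r + i := by
          have h1 : (d:ℤ) ∣ k + i := (Int.natCast_dvd_natCast.2 hdb).trans hbk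
          have h2 : (d:ℤ) ∣ (r + i) - (k + i) := (Int.natCast_dvd_natCast.2 hdL).trans hki.dvd
          have h3 := dvd_add h2 h1
          rwa [sub_add_cancel] at h3
        have hdr' : d ∣ (r + (i:ℤ)).natAbs := Int.natCast_dvd.1 hdr
        have hdΔ : d ∈ Δ := Finset.mem_biUnion.2 ⟨i, hiI, Nat.mem_divisors.2
          ⟨hdr', (Int.natAbs_pos.2 (hI0 i hiI)).ne'⟩⟩
        have hdP : d ∣ P := hdr'.trans (Finset.dvd_prod_of_mem (fun i : ℕ => (r + (i:ℤ)).natAbs) hiI)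
        obtain ⟨a, ha⟩ := hdb
        have hcop : Nat.Coprime a L := by
          apply Nat.coprime_of_dvd
          intro p hp hpa hpL
          have hpW : p ∣ W := by
            rcases (hp.dvd_mul).1 hpL with h | h
            · exact h
            · exact h.mul_left _
          have h1 : p * d ∣ L := mul_dvd_mul hpW hdP
          have h2 : p * d ∣ b := by rw [ha, mul_comm d a]; exact mul_dvd_mul_right hpa d
          have h3 : p * d ∣ d := Nat.dvd_gcd h2 h1
          have h4 := Nat.le_of_dvd hd0 h3
          have h5 := hp.two_le
          nlinarith
        have haA : a ∈ A d := by
          refine ⟨⟨?_, ?_⟩, hcop⟩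
          · change d * a ∈ B
            rw [← ha]; exact hbB'
          · intro p hp hpa
            by_contra hpN
            have h1 : p ∣ L := ((hp.dvd_factorial).2 (not_lt.1 hpN)).trans hNL
            exact hp.one_lt.ne' (Nat.eq_one_of_dvd_coprimes hcop hpa h1)
        apply hb
        refine Set.mem_biUnion (x := (i, d)) (Finset.mem_product.2 ⟨hiI, hdΔ⟩) ?_
        refine ⟨⟨a, haA, ?_⟩, ?_⟩
        · have h1 : b ∣ k + i := by exact_mod_cast hbk
          exact (Dvd.intro_left d ha.symm).trans h1
        · change ((k + i : ℕ) : ℤ) ≡ r + i [ZMOD L]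
          push_cast; exact hki
      · refine ⟨fun h => ?_, fun h => absurd h hri⟩
        exfalso
        have hiJ : i ∈ J := Finset.mem_filter.2 ⟨hi, hri⟩
        apply h
        refine ⟨bb i, hbB i hiJ, ?_⟩
        have h1 : bb i ∣ L := (Finset.dvd_prod_of_mem bb hiJ).trans hQL
        have h2 : (bb i:ℤ) ∣ (r + i) - (k + i) := (Int.natCast_dvd_natCast.2 h1).trans hki.dvd
        have h3 := dvd_sub (hbd i hiJ) h2
        rwa [sub_sub_cancel] at h3
  apply low_pos G (1 / (2 * L)) (C1 + ∑ x ∈ I ×ˢ Δ, Cf x) (by positivity)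
  have hall : ∀ᶠ m : ℕ in atTop, ∀ x ∈ I ×ˢ Δ,
      LS {k | k + x.1 ∈ MN (A x.2) ∩ {n : ℕ | (n:ℤ) ≡ r + x.1 [ZMOD L]}} m ≤ 2 * ε / L * Real.log m + Cf x :=
    (Filter.eventually_all_finset _).2 hCf
  filter_upwards [hall, eventually_ge_atTop 1] with m hm hm1
  have h1 := (LS_mono hcover m).trans (LS_union_le _ _ m)
  have h2 := (abs_le.1 (hC1 m hm1)).1
  have h3 : LS bad m ≤ ∑ x ∈ I ×ˢ Δ, (2 * ε / L * Real.log m + Cf x) :=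
    (LS_biUnion_le _ _ m).trans (Finset.sum_le_sum hm)
  rw [Finset.sum_add_distrib, Finset.sum_const, nsmul_eq_mul, Finset.card_product] at h3
  push_cast at h3
  have h8 : (0:ℝ) ≤ Real.log m := Real.log_natCast_nonneg m
  have h4 : q * (2 * ε / L * Real.log m) ≤ 1 / (2 * L) * Real.log m := by
    have : q * (2 * ε) ≤ 1 / 2 := by
      simp only [ε]
      rw [← mul_assoc, mul_one_div, div_le_div_iff₀ (by positivity) (by norm_num)]
      linarith
    calc q * (2 * ε / L * Real.log m) = (q * (2 * ε)) * (Real.log m / L) := by ring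
      _ ≤ 1 / 2 * (Real.log m / L) := by gcongr
      _ = _ := by field_simp
  have h5 : 1 / (L:ℝ) * Real.log m = 1 / (2 * L) * Real.log m + 1 / (2 * L) * Real.log m := by
    field_simp; ring
  linarith

/-- If `B` is taut, then every finite block of `η` (the indicator of the `B`-free numbers)
occurs in `η` along a set of strictly positive lower logarithmic density; this expresses
that the Mirsky measure has full topological support in `X_η`. -/
theorem block_of_eta_positive_frequency (B : Set ℕ) (hB0 : 0 ∉ B) (hprim : Primitive B)
    (htaut : IsTaut B) (r : ℤ) (n : ℕ) (hn : 0 < n) :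
    0 < logDensLow {k : ℤ | 0 ≤ k ∧
        ∀ i ∈ Finset.Icc 1 n, ((k + (i : ℤ)) ∈ freeZ B ↔ (r + (i : ℤ)) ∈ freeZ B)} := by

  rcases B.eq_empty_or_nonempty with rfl | hne
  · apply low_pos _ 1 0 one_pos
    filter_upwards [eventually_ge_atTop 1] with m hm
    have e : {k : ℕ | (k:ℤ) ∈ {k : ℤ | 0 ≤ k ∧
        ∀ i ∈ Finset.Icc 1 n, ((k + (i : ℤ)) ∈ freeZ ∅ ↔ (r + (i : ℤ)) ∈ freeZ ∅)}} = univ := by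
      have hf : ∀ z : ℤ, z ∈ freeZ ∅ := by
        rintro z ⟨b, hb, _⟩; exact hb
      apply Set.eq_univ_of_forall
      intro k
      exact ⟨by positivity, fun i _ => ⟨fun _ => hf _, fun _ => hf _⟩⟩
    have h := le_LS_univ m hm
    rw [← e] at h
    have h2 : (1:ℝ) * Real.log m - 0 = Real.log m := by ring
    exact h2.le.trans h
  · exact block_of_eta_aux B hB0 htaut hne r n hn
end
end
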